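/- Let n ≥ 3 and ℓ ≥ 1 be integers and put μ = 1/(2(n−1)ℓ). There exist real numbers X₀ > 0 and c > 0 (depending only on n and ℓ) such that for every real X > X₀ there exist at least c·X^μ pairwise non-isomorphic number fields of degree n over ℚ whose discriminant has absolute value at most X and whose class number is divisible by ℓ. -/

import Mathlib

section PartA
section ThreeTerm
open Finset

variable {Q : ℕ} [Fact Q.Prime]

noncomputable def powSum (Q : ℕ) [Fact Q.Prime] (k : ℕ) (t : ZMod Q) : ℂ :=
  ∑ r : ZMod Q, ZMod.stdAddChar (t * r ^ k)

lemma card_pow_eq_le (k : ℕ) (hk : 0 < k) (c : ZMod Q) :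
    #{r : ZMod Q | r ^ k = c} ≤ k := by
  classical
  calc #{r : ZMod Q | r ^ k = c} ≤ (Polynomial.nthRoots k c).toFinset.card := by
        apply Finset.card_le_card
        intro r hr
        simp only [mem_filter, mem_univ, true_and] at hr
        simp [Polynomial.mem_nthRoots hk, hr]
    _ ≤ _ := (Multiset.toFinset_card_le _).trans (Polynomial.card_nthRoots k c)

lemma sum_char (a : ZMod Q) :
    ∑ t : ZMod Q, (ZMod.stdAddChar (t * a) : ℂ) = if a = 0 then (Q : ℂ) else 0 := by
  rw [AddChar.sum_mulShift a (ZMod.isPrimitive_stdAddChar Q)]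
  simp [ZMod.card]

lemma sum_normSq_powSum (k : ℕ) (hk : 0 < k) :
    ∑ t : ZMod Q, ‖powSum Q k t‖ ^ 2 ≤ k * (Q : ℝ) ^ 2 := by
  have h1 : ((∑ t : ZMod Q, ‖powSum Q k t‖ ^ 2 : ℝ) : ℂ)
      = Q * (∑ r : ZMod Q, (#{s : ZMod Q | s ^ k = r ^ k} : ℂ)) := by
    push_cast
    have : ∀ t : ZMod Q, ((‖powSum Q k t‖ : ℂ)) ^ 2
        = ∑ r : ZMod Q, ∑ s : ZMod Q, (ZMod.stdAddChar (t * (s ^ k - r ^ k)) : ℂ) := by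
      intro t
      rw [← Complex.conj_mul']
      unfold powSum
      rw [map_sum, sum_mul_sum]
      refine sum_congr rfl fun r _ => sum_congr rfl fun s _ => ?_
      rw [← AddChar.map_neg_eq_conj, ← AddChar.map_add_eq_mul]
      congr 1; ring
    simp_rw [this]
    rw [sum_comm, mul_sum]
    refine sum_congr rfl fun r _ => ?_
    rw [sum_comm]
    simp_rw [sum_char, sub_eq_zero]
    rw [← sum_filter, sum_const, nsmul_eq_mul, mul_comm]
  have h2 : (∑ t : ZMod Q, ‖powSum Q k t‖ ^ 2 : ℝ)
      = Q * (∑ r : ZMod Q, (#{s : ZMod Q | s ^ k = r ^ k} : ℝ)) := by exact_mod_cast h1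
  rw [h2]
  have h3 : (∑ r : ZMod Q, (#{s : ZMod Q | s ^ k = r ^ k} : ℝ)) ≤ ∑ r : ZMod Q, (k : ℝ) :=
    sum_le_sum fun r _ => by exact_mod_cast card_pow_eq_le k hk _
  simp only [sum_const, card_univ, ZMod.card, nsmul_eq_mul] at h3
  nlinarith [Nat.cast_nonneg (α := ℝ) Q]

lemma powSum_mul (k : ℕ) (t c : ZMod Q) (hc : c ≠ 0) : powSum Q k (t * c ^ k) = powSum Q k t := by
  unfold powSum
  refine Fintype.sum_equiv (Equiv.mulLeft₀ c hc) _ _ fun r => ?_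
  simp [mul_pow, mul_assoc]

lemma normSq_powSum_le (k : ℕ) (hk : 0 < k) (t : ZMod Q) (ht : t ≠ 0) :
    ‖powSum Q k t‖ ^ 2 ≤ 2 * (k : ℝ) ^ 2 * Q := by
  have hQ : 2 ≤ Q := (Fact.out : Q.Prime).two_le
  have hQ' : (2 : ℝ) ≤ Q := by exact_mod_cast hQ
  have h1 : ∑ c ∈ univ.erase (0 : ZMod Q), ‖powSum Q k (t * c ^ k)‖ ^ 2
      = (Q - 1) * ‖powSum Q k t‖ ^ 2 := by
    rw [sum_congr rfl (g := fun _ => ‖powSum Q k t‖ ^ 2)]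
    · rw [sum_const, card_erase_of_mem (mem_univ _), card_univ, ZMod.card, nsmul_eq_mul,
        Nat.cast_sub (by omega)]; simp
    · intro c hc; rw [powSum_mul k t c (ne_of_mem_erase hc)]
  have h2 : ∑ c ∈ univ.erase (0 : ZMod Q), ‖powSum Q k (t * c ^ k)‖ ^ 2
      ≤ ∑ c : ZMod Q, ‖powSum Q k (t * c ^ k)‖ ^ 2 :=
    sum_le_sum_of_subset_of_nonneg (erase_subset _ _) fun _ _ _ => by positivity
  have h3 : ∑ c : ZMod Q, ‖powSum Q k (t * c ^ k)‖ ^ 2 ≤ k * ∑ y : ZMod Q, ‖powSum Q k y‖ ^ 2 := by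
    rw [← sum_fiberwise (s := univ) (g := fun c : ZMod Q => t * c ^ k), mul_sum]
    refine sum_le_sum fun y _ => ?_
    rw [sum_congr rfl (g := fun _ => ‖powSum Q k y‖ ^ 2)]
    · rw [sum_const, nsmul_eq_mul]
      gcongr
      refine le_trans (card_le_card ?_) (card_pow_eq_le k hk (y / t))
      intro c hc
      simp only [mem_filter, mem_univ, true_and] at hc ⊢
      rw [← hc]; field_simp
    · intro c hc
      simp only [mem_filter, mem_univ, true_and] at hc
      rw [hc]
  have h4 := sum_normSq_powSum (Q := Q) k hk
  have hk' : (0:ℝ) < k := by exact_mod_cast hk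
  have h5 : ((Q:ℝ) - 1) * ‖powSum Q k t‖ ^ 2 ≤ k * (k * (Q:ℝ)^2) := by
    rw [← h1]; exact h2.trans (h3.trans (by gcongr))
  have h6 : ((Q:ℝ) / 2) * ‖powSum Q k t‖ ^ 2 ≤ k * (k * (Q:ℝ)^2) := by
    refine le_trans ?_ h5
    gcongr; linarith
  have h7 : (0:ℝ) < Q := by linarith
  have : (Q:ℝ) * ‖powSum Q k t‖ ^ 2 ≤ Q * (2 * (k : ℝ) ^ 2 * Q) := by nlinarith
  exact le_of_mul_le_mul_left this h7

lemma count_triples (k : ℕ) (hk : 0 < k) (c1 c2 c3 : ZMod Q) (h1 : c1 ≠ 0) (h2 : c2 ≠ 0)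
    (h3 : c3 ≠ 0) :
    (Q : ℝ) ^ 2 - 2 * k ^ 2 * Real.sqrt Q * Q ≤
      #{x : ZMod Q × ZMod Q × ZMod Q | c1 * x.1 ^ k + c2 * x.2.1 ^ k + c3 * x.2.2 ^ k = 0} := by
  set T : Finset (ZMod Q × ZMod Q × ZMod Q) :=
    {x | c1 * x.1 ^ k + c2 * x.2.1 ^ k + c3 * x.2.2 ^ k = 0} with hT
  have hQ0 : (0:ℝ) < Q := by exact_mod_cast (Fact.out : Q.Prime).pos
  have key : (Q : ℂ) * #T
      = ∑ t : ZMod Q, powSum Q k (t * c1) * (powSum Q k (t * c2) * powSum Q k (t * c3)) := by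
    have : ∀ t : ZMod Q, powSum Q k (t * c1) * (powSum Q k (t * c2) * powSum Q k (t * c3))
       = ∑ x : ZMod Q × ZMod Q × ZMod Q,
          (ZMod.stdAddChar (t * (c1 * x.1 ^ k + c2 * x.2.1 ^ k + c3 * x.2.2 ^ k)) : ℂ) := by
      intro t
      unfold powSum
      rw [Fintype.sum_prod_type, sum_mul]
      refine sum_congr rfl fun r _ => ?_
      rw [Fintype.sum_prod_type, sum_mul_sum, mul_sum]
      refine sum_congr rfl fun s _ => ?_
      rw [mul_sum]
      refine sum_congr rfl fun w _ => ?_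
      rw [← AddChar.map_add_eq_mul, ← AddChar.map_add_eq_mul]
      congr 1; ring
    simp_rw [this]
    rw [sum_comm]
    simp_rw [sum_char]
    rw [← sum_filter, sum_const, nsmul_eq_mul, mul_comm]
  have h0 : powSum Q k 0 = Q := by simp [powSum, ZMod.card]
  rw [← add_sum_erase _ _ (mem_univ (0 : ZMod Q))] at key
  simp only [zero_mul, h0] at key
  set R := ∑ t ∈ univ.erase (0 : ZMod Q), powSum Q k (t * c1) * (powSum Q k (t * c2) * powSum Q k (t * c3)) with hR
  have sumc : ∀ c : ZMod Q, c ≠ 0 → ∑ t : ZMod Q, ‖powSum Q k (t * c)‖ ^ 2 ≤ k * (Q : ℝ) ^ 2 := by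
    intro c hc
    rw [← Fintype.sum_equiv (Equiv.mulRight₀ c hc).symm (fun t => ‖powSum Q k t‖ ^ 2)]
    · exact sum_normSq_powSum k hk
    · intro x; simp [hc]
  have hRn : ‖R‖ ≤ 2 * k * Real.sqrt Q * (k * (Q : ℝ) ^ 2) := by
    refine (norm_sum_le _ _).trans ?_
    have : ∀ t ∈ univ.erase (0 : ZMod Q),
        ‖powSum Q k (t * c1) * (powSum Q k (t * c2) * powSum Q k (t * c3))‖
        ≤ (2 * k * Real.sqrt Q) * ((‖powSum Q k (t * c2)‖ ^ 2 + ‖powSum Q k (t * c3)‖ ^ 2) / 2) := by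
      intro t ht
      have ht0 := ne_of_mem_erase ht
      rw [norm_mul, norm_mul]
      have hb : ‖powSum Q k (t * c1)‖ ≤ 2 * k * Real.sqrt Q := by
        apply le_of_sq_le_sq _ (by positivity)
        refine (normSq_powSum_le k hk _ (mul_ne_zero ht0 h1)).trans ?_
        rw [mul_pow, Real.sq_sqrt hQ0.le]
        nlinarith [show (0:ℝ) ≤ (k:ℝ)^2 * Q by positivity]
      gcongr
      nlinarith [sq_nonneg (‖powSum Q k (t * c2)‖ - ‖powSum Q k (t * c3)‖)]
    refine (sum_le_sum this).trans ?_
    rw [← mul_sum]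
    gcongr
    refine (sum_le_sum_of_subset_of_nonneg (erase_subset _ _) fun _ _ _ => by positivity).trans ?_
    rw [← sum_div, sum_add_distrib]
    linarith [sumc c2 h2, sumc c3 h3]
  have hRe : R = (((Q:ℝ) * #T - Q ^ 3 : ℝ) : ℂ) := by
    push_cast; rw [key]; ring
  rw [hRe, Complex.norm_real, Real.norm_eq_abs] at hRn
  have := (abs_le.mp hRn).1
  have h8 : (Q:ℝ) * ((Q : ℝ) ^ 2 - 2 * k ^ 2 * Real.sqrt Q * Q) ≤ Q * #T := by nlinarith
  exact le_of_mul_le_mul_left h8 hQ0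

lemma three_term_aux (k : ℕ) (hk : 0 < k) (N0 : ℕ)
    (hlarge : ((3 * k + N0 * k ^ 2 : ℕ) : ℝ) * Q < (Q : ℝ) ^ 2 - 2 * k ^ 2 * Real.sqrt Q * Q)
    (c1 c2 c3 : ZMod Q) (h1 : c1 ≠ 0) (h2 : c2 ≠ 0)
    (h3 : c3 ≠ 0) (E : Finset (ZMod Q)) (hE : #E ≤ N0) :
    ∃ r s : ZMod Q, r ≠ 0 ∧ s ≠ 0 ∧ c1 * r ^ k + c2 * s ^ k = c3 ∧ r ^ k ∉ E := by
  by_contra! hcon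
  have hc := count_triples k hk c1 c2 (-c3) h1 h2 (neg_ne_zero.mpr h3)
  set T : Finset (ZMod Q × ZMod Q × ZMod Q) :=
    {x | c1 * x.1 ^ k + c2 * x.2.1 ^ k + (-c3) * x.2.2 ^ k = 0} with hT
  let R : ZMod Q → Finset (ZMod Q) := fun c => {r : ZMod Q | r ^ k = c}
  have hRc : ∀ c, #(R c) ≤ k := card_pow_eq_le k hk
  have hRm : ∀ r c, r ∈ R c ↔ r ^ k = c := by intro r c; simp [R]
  let T1 := univ.biUnion fun w : ZMod Q => ({0} ×ˢ (R (c3 * w ^ k / c2) ×ˢ {w}) : Finset (ZMod Q × ZMod Q × ZMod Q))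
  let T2 := univ.biUnion fun w : ZMod Q => (R (c3 * w ^ k / c1) ×ˢ ({0} ×ˢ {w}) : Finset (ZMod Q × ZMod Q × ZMod Q))
  let T3 := univ.biUnion fun w : ZMod Q => ({w} ×ˢ (R (-(c1 * w ^ k) / c2) ×ˢ {0}) : Finset (ZMod Q × ZMod Q × ZMod Q))
  let T4 := (E ×ˢ univ).biUnion fun w : ZMod Q × ZMod Q =>
    (R (w.1 * w.2 ^ k) ×ˢ (R ((c3 * w.2 ^ k - c1 * (w.1 * w.2 ^ k)) / c2) ×ˢ {w.2}) : Finset (ZMod Q × ZMod Q × ZMod Q))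
  have b1 : #T1 ≤ Q * k := by
    refine (card_biUnion_le_card_mul _ _ k ?_).trans (by simp [ZMod.card])
    intro w _; simpa using hRc _
  have b2 : #T2 ≤ Q * k := by
    refine (card_biUnion_le_card_mul _ _ k ?_).trans (by simp [ZMod.card])
    intro w _; simpa using hRc _
  have b3 : #T3 ≤ Q * k := by
    refine (card_biUnion_le_card_mul _ _ k ?_).trans (by simp [ZMod.card])
    intro w _; simpa using hRc _
  have b4 : #T4 ≤ (N0 * Q) * k ^ 2 := by
    refine (card_biUnion_le_card_mul _ _ (k ^ 2) ?_).trans ?_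
    · intro w _; simp only [card_product, card_singleton, mul_one]; rw [sq]
      exact Nat.mul_le_mul (hRc _) (hRc _)
    · rw [card_product, card_univ, ZMod.card]; gcongr
  have hsub : T ⊆ T1 ∪ T2 ∪ T3 ∪ T4 := by
    rintro ⟨r, s, w⟩ hx
    simp only [hT, mem_filter, mem_univ, true_and] at hx
    simp only [mem_union]
    by_cases hr : r = 0
    · left; left; left
      simp only [T1, mem_biUnion, mem_univ, true_and, mem_product, mem_singleton, hRm]
      refine ⟨w, hr, ?_, rfl⟩
      rw [hr, zero_pow hk.ne'] at hx
      field_simp; linear_combination hx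
    by_cases hs : s = 0
    · left; left; right
      simp only [T2, mem_biUnion, mem_univ, true_and, mem_product, mem_singleton, hRm]
      refine ⟨w, ?_, hs, rfl⟩
      rw [hs, zero_pow hk.ne'] at hx
      field_simp; linear_combination hx
    by_cases hw : w = 0
    · left; right
      simp only [T3, mem_biUnion, mem_univ, true_and, mem_product, mem_singleton, hRm]
      refine ⟨r, rfl, ?_, hw⟩
      rw [hw, zero_pow hk.ne'] at hx
      field_simp; linear_combination hx
    right
    have hEm := hcon (r / w) (s / w) (div_ne_zero hr hw) (div_ne_zero hs hw) (by
      rw [div_pow, div_pow]; field_simp; linear_combination hx)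
    simp only [T4, mem_biUnion, mem_univ, and_true, mem_product, mem_singleton, hRm]
    refine ⟨((r / w) ^ k, w), hEm, ?_, ?_, rfl⟩
    · simp only; rw [div_pow]; field_simp
    · simp only; rw [div_pow]; field_simp; linear_combination hx
  have hcard : #T ≤ (3 * k + N0 * k ^ 2) * Q := by
    refine (card_le_card hsub).trans ((card_union_le _ _).trans ?_)
    have := (card_union_le (T1 ∪ T2) T3)
    have := (card_union_le T1 T2)
    nlinarith
  have : (#T : ℝ) ≤ ((3 * k + N0 * k ^ 2 : ℕ) : ℝ) * Q := by exact_mod_cast hcard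
  linarith

end ThreeTerm

theorem three_term (k : ℕ) (hk : 0 < k) (N0 : ℕ) : ∃ B : ℕ, ∀ Q : ℕ, ∀ _ : Fact Q.Prime, B < Q →
    ∀ c1 c2 c3 : ZMod Q, c1 ≠ 0 → c2 ≠ 0 → c3 ≠ 0 → ∀ E : Finset (ZMod Q), E.card ≤ N0 →
    ∃ r s : ZMod Q, r ≠ 0 ∧ s ≠ 0 ∧ c1 * r ^ k + c2 * s ^ k = c3 ∧ r ^ k ∉ E := by
  set A := 3 * k + N0 * k ^ 2 with hA
  refine ⟨(A + 2 * k ^ 2) ^ 2 , fun Q _ hQ c1 c2 c3 h1 h2 h3 E hE =>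
    three_term_aux k hk N0 ?_ c1 c2 c3 h1 h2 h3 E hE⟩
  rw [← hA]
  have hQ' : ((A:ℝ) + 2 * k ^ 2) ^ 2 < Q := by exact_mod_cast hQ
  have hs : ((A:ℝ) + 2 * k ^ 2) < Real.sqrt Q := Real.lt_sqrt_of_sq_lt hQ'
  have hq : Real.sqrt Q * Real.sqrt Q = Q := Real.mul_self_sqrt (by positivity)
  have hkr : (1:ℝ) ≤ k := by exact_mod_cast hk
  have hAr : (0:ℝ) ≤ A := by positivity
  have hs1 : 1 < Real.sqrt Q := by nlinarith
  have hQ0 : (0:ℝ) < Q := by nlinarith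
  have : (A:ℝ) + 2 * k ^ 2 * Real.sqrt Q < Q := by nlinarith
  nlinarith
end PartA

section PartF
theorem torsion_bound (K : Type*) [Field K] [NumberField K] (n : ℕ) (hn : Module.finrank ℚ K = n)
    (z : K) (m : ℕ) (hm : 0 < m) (hz : z ^ m = 1) : z ^ (2 * n).factorial = 1 := by
  have hfin : IsOfFinOrder z := isOfFinOrder_iff_pow_eq_one.mpr ⟨m, hm, hz⟩
  have hprim := IsPrimitiveRoot.orderOf z
  have hpos : 0 < orderOf z := hfin.orderOf_pos
  have : NeZero (orderOf z) := ⟨hpos.ne'⟩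
  have h1 := hprim.totient_le_degree_minpoly
  have hint : IsIntegral ℤ z := hprim.isIntegral hpos
  have h2 : (minpoly ℤ z).natDegree ≤ n := by
    rw [← hn]
    have := minpoly.isIntegrallyClosed_eq_field_fractions' ℚ hint
    rw [← (minpoly.monic hint).natDegree_map (algebraMap ℤ ℚ), ← this]
    exact minpoly.natDegree_le z
  apply orderOf_dvd_iff_pow_eq_one.mp
  rw [Nat.dvd_iff_prime_pow_dvd_dvd]
  intro p k hp hdvd
  rcases Nat.eq_zero_or_pos k with rfl | hk
  · simp
  apply Nat.dvd_factorial (pow_pos hp.pos _)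
  have h3 : Nat.totient (p ^ k) ≤ n :=
    (Nat.le_of_dvd (Nat.totient_pos.mpr hpos) (Nat.totient_dvd_of_dvd hdvd)).trans (h1.trans h2)
  rw [Nat.totient_prime_pow hp hk] at h3
  obtain ⟨j, rfl⟩ : ∃ j, k = j + 1 := ⟨k - 1, by omega⟩
  simp only [Nat.add_sub_cancel] at h3
  rw [pow_succ]
  have := hp.two_le
  have : p ≤ 2 * (p - 1) := by omega
  nlinarith [Nat.mul_le_mul_left (p ^ j) this]
open Polynomial NumberField

theorem hensel_hom (K : Type*) [Field K] [NumberField K] (f : ℤ[X]) (pb : PowerBasis ℚ K)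
    (hmin : minpoly ℚ pb.gen = f.map (algebraMap ℤ ℚ)) (θ : 𝓞 K) (hθ : (θ : K) = pb.gen)
    (Q : ℕ) [Fact Q.Prime] (x : ZMod Q) (hx : aeval x f = 0) (hx' : aeval x (derivative f) ≠ 0) :
    ∃ φ : 𝓞 K →+* ZMod Q, φ θ = x := by
  set a : ℤ_[Q] := (x.val : ℤ_[Q]) with ha
  have hax : PadicInt.toZMod a = x := by simp [ha]
  have hev : ∀ (g : ℤ[X]) (b : ℤ_[Q]), PadicInt.toZMod (aeval b g) = aeval (PadicInt.toZMod b) g := by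
    intro g b
    rw [aeval_def, aeval_def, hom_eval₂]
    congr 1
    exact RingHom.ext_int _ _
  have hlt : ∀ b : ℤ_[Q], ‖b‖ < 1 ↔ PadicInt.toZMod b = 0 := by
    intro b
    rw [← RingHom.mem_ker, PadicInt.ker_toZMod, IsLocalRing.mem_maximalIdeal, PadicInt.mem_nonunits]
  have h1 : ‖aeval a f‖ < 1 := by rw [hlt, hev, hax, hx]
  have h2 : ‖aeval a (derivative f)‖ = 1 := by
    apply le_antisymm (PadicInt.norm_le_one _)
    by_contra! h
    rw [hlt, hev, hax] at h
    exact hx' h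
  obtain ⟨z, hz, hza, -, -⟩ := hensels_lemma (F := f) (a := a) (by rw [h2]; simpa using h1)
  have hzx : PadicInt.toZMod z = x := by
    rw [h2, hlt, map_sub, hax] at hza
    exact sub_eq_zero.mp hza
  let ψ : K →ₐ[ℚ] ℚ_[Q] := pb.lift (z : ℚ_[Q]) (by
    rw [hmin, aeval_map_algebraMap]
    have := congrArg (PadicInt.Coe.ringHom (p := Q)) hz
    rw [aeval_def, hom_eval₂, map_zero] at this
    rw [aeval_def, RingHom.ext_int (algebraMap ℤ ℚ_[Q]) (PadicInt.Coe.ringHom.comp (algebraMap ℤ ℤ_[Q]))]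
    exact this)
  have hψ : ψ pb.gen = z := pb.lift_gen _ _
  have hint : ∀ y : 𝓞 K, ψ (y : K) ∈ PadicInt.subring Q := by
    intro y
    have h3 : IsIntegral ℤ (ψ (y:K)) := (RingOfIntegers.isIntegral_coe y).map (ψ.restrictScalars ℤ)
    have h4 : IsIntegral ℤ_[Q] (ψ (y:K)) := by
      obtain ⟨g, hg, hg0⟩ := h3
      refine ⟨g.map (algebraMap ℤ ℤ_[Q]), hg.map _, ?_⟩
      rw [eval₂_map]
      rw [RingHom.ext_int ((algebraMap ℤ_[Q] ℚ_[Q]).comp (algebraMap ℤ ℤ_[Q])) (algebraMap ℤ ℚ_[Q])]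
      exact hg0
    obtain ⟨w, hw⟩ := IsIntegrallyClosed.isIntegral_iff.mp h4
    rw [← hw]
    exact w.2
  let ρ : 𝓞 K →+* PadicInt.subring Q :=
    ((ψ : K →+* ℚ_[Q]).comp (algebraMap (𝓞 K) K)).codRestrict (PadicInt.subring Q) hint
  let ρ' : 𝓞 K →+* ℤ_[Q] := ρ
  refine ⟨PadicInt.toZMod.comp ρ', ?_⟩
  have : ρ' θ = z := by
    apply Subtype.ext
    change ψ (θ : K) = z
    rw [hθ, hψ]
  rw [RingHom.comp_apply, this, hzx]

theorem ideal_pow_of_root (R : Type*) [CommRing R] [IsDedekindDomain R] (f : ℤ[X]) (θ : R)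
    (hθ : aeval θ f = 0) (a u : ℤ) (l : ℕ) (hfa : f.eval a = u ^ l)
    (hcop : IsCoprime (f.derivative.eval a) u) : ∃ I : Ideal R, Ideal.span {θ - (a : R)} = I ^ l := by
  obtain ⟨k, hk⟩ := binomExpansion (f.map (algebraMap ℤ R)) (a : R) (θ - a)
  have e1 : (f.map (algebraMap ℤ R)).eval (a : R) = (u : R) ^ l := by
    have : (a : R) = algebraMap ℤ R a := by simp
    rw [this, eval_map, eval₂_at_apply, hfa]; simp
  have e2 : (f.map (algebraMap ℤ R)).derivative.eval (a : R) = ((f.derivative.eval a : ℤ) : R) := by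
    have : (a : R) = algebraMap ℤ R a := by simp
    rw [derivative_map, this, eval_map, eval₂_at_apply]; simp
  have e3 : (f.map (algebraMap ℤ R)).eval ((a : R) + (θ - a)) = 0 := by
    rw [add_sub_cancel, eval_map]; exact hθ
  rw [e1, e2, e3] at hk
  set d : R := ((f.derivative.eval a : ℤ) : R)
  set t : R := θ - a
  have hprod : t * (-(d + k * t)) = (u : R) ^ l := by linear_combination hk
  have hc : IsCoprime d ((u : R) ^ l) := by
    apply IsCoprime.pow_right
    have := hcop.map (Int.castRingHom R)
    simpa using this
  have hc2 : IsCoprime t (-(d + k * t)) := by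
    obtain ⟨x, y, hxy⟩ := hc
    refine ⟨x * (-k) + y * (-(d + k * t)), -x , ?_⟩
    linear_combination hxy + y * hprod
  have hI : Ideal.span {t} * Ideal.span {-(d + k * t)} = (Ideal.span {(u : R)}) ^ l := by
    rw [Ideal.span_singleton_mul_span_singleton, hprod, Ideal.span_singleton_pow]
  let _ : GCDMonoid (Ideal R) := UniqueFactorizationMonoid.toGCDMonoid _
  exact exists_eq_pow_of_mul_eq_pow_of_coprime ((Ideal.isCoprime_span_singleton_iff _ _).mpr hc2) hI

theorem lin_dep_mod (p : ℕ) [Fact p.Prime] (N r : ℕ) (h : r < N) (k : Fin N → Fin r → ℤ) :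
    ∃ e : Fin N → ℕ, (∃ i, ¬ p ∣ e i) ∧ ∀ s, (p : ℤ) ∣ ∑ j, (e j : ℤ) * k j s := by
  have hnl : ¬ LinearIndependent (ZMod p) (fun j => (fun s => (k j s : ZMod p)) : Fin N → (Fin r → ZMod p)) := by
    intro hl
    have := hl.fintype_card_le_finrank
    simp at this
    omega
  rw [Fintype.not_linearIndependent_iff] at hnl
  obtain ⟨g, hg, i, hi⟩ := hnl
  refine ⟨fun j => (g j).val, ⟨i, ?_⟩, fun s => ?_⟩
  · rw [← ZMod.natCast_eq_zero_iff]; simpa using hi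
  · rw [← ZMod.intCast_zmod_eq_zero_iff_dvd]
    have := congrFun hg s
    simp only [Finset.sum_apply, Pi.smul_apply, smul_eq_mul, Pi.zero_apply] at this
    push_cast
    simpa using this

theorem class_number_step (K : Type*) [Field K] [NumberField K] (N : ℕ) (hN : Units.rank K < N)
    (l : ℕ) (x : Fin N → 𝓞 K) (hx0 : ∀ j, x j ≠ 0)
    (hx : ∀ j, ∃ I : Ideal (𝓞 K), Ideal.span {x j} = I ^ l) (hl : 1 ≤ l)
    (hdvd : ¬ l ∣ classNumber K) :
    ∃ p : ℕ, p.Prime ∧ p ∣ l ∧ ∃ e : Fin N → ℕ, (∃ i, ¬ p ∣ e i) ∧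
      ∃ (z : (𝓞 K)ˣ) (g : 𝓞 K), z ∈ Units.torsion K ∧ ∏ j, x j ^ e j = z * g ^ p := by
  rw [Nat.dvd_iff_prime_pow_dvd_dvd] at hdvd
  push Not at hdvd
  obtain ⟨p, k, hp, hpk, hpk'⟩ := hdvd
  have hh0 : classNumber K ≠ 0 := Fintype.card_ne_zero
  obtain ⟨m, h', hph', hh'⟩ := Nat.exists_eq_pow_mul_and_not_dvd hh0 p hp.ne_one
  have hmk : m < k := by
    by_contra! hc
    exact hpk' (hh' ▸ (pow_dvd_pow p hc).mul_right _)
  obtain ⟨l', hl'⟩ : p ^ (m + 1) ∣ l := (pow_dvd_pow p hmk).trans hpk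
  have : Fact p.Prime := ⟨hp⟩
  have step1 : ∀ j, ∃ (v : (𝓞 K)ˣ) (d : 𝓞 K), x j ^ h' = v * d ^ p := by
    intro j
    obtain ⟨I, hI⟩ := hx j
    have hI0 : I ≠ ⊥ := by
      rintro rfl
      rw [← Ideal.zero_eq_bot, zero_pow (by omega), Ideal.zero_eq_bot, Ideal.span_singleton_eq_bot] at hI
      exact hx0 j hI
    have hmem : I ∈ nonZeroDivisors (Ideal (𝓞 K)) := mem_nonZeroDivisors_of_ne_zero hI0
    have hcl : ClassGroup.mk0 (⟨I, hmem⟩ ^ classNumber K) = 1 := by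
      rw [map_pow]; exact pow_card_eq_one
    rw [ClassGroup.mk0_eq_one_iff] at hcl
    obtain ⟨b, hb⟩ := hcl.principal
    have hb' : I ^ classNumber K = Ideal.span {b} := hb
    have h3 : Ideal.span {x j ^ h'} = Ideal.span {(b ^ l') ^ p} := by
      rw [← Ideal.span_singleton_pow, hI, ← Ideal.span_singleton_pow, ← Ideal.span_singleton_pow, ← hb',
        ← pow_mul, ← pow_mul, ← pow_mul]
      congr 1
      rw [hh', hl']; ring
    rw [Ideal.span_singleton_eq_span_singleton] at h3
    obtain ⟨v, hv⟩ := h3.symm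
    exact ⟨v, b ^ l', by rw [← hv]; ring⟩
  choose v d hvd using step1
  have step2 := fun j => (Units.exist_unique_eq_mul_prod K (v j)).exists
  choose ze hze using step2
  obtain ⟨e, ⟨i, hi⟩, he⟩ := lin_dep_mod p N (Units.rank K) hN (fun j => (ze j).2)
  choose q hq using he
  refine ⟨p, hp, (dvd_pow_self p (by omega : m + 1 ≠ 0)).trans ⟨l', hl'⟩, fun j => h' * e j, ⟨i, ?_⟩,
    ∏ j, ((ze j).1 : (𝓞 K)ˣ) ^ e j, (∏ s, Units.fundSystem K s ^ q s : (𝓞 K)ˣ) * ∏ j, d j ^ e j,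
     Subgroup.prod_mem _ fun j _ => Subgroup.pow_mem _ (ze j).1.2 _, ?_⟩
  · rw [hp.dvd_mul]; push Not; exact ⟨hph', hi⟩
  have h4 : ∏ j, v j ^ e j = (∏ j, ((ze j).1 : (𝓞 K)ˣ) ^ e j) * (∏ s, Units.fundSystem K s ^ q s) ^ p := by
    calc ∏ j, v j ^ e j = ∏ j, ((ze j).1 * ∏ s, Units.fundSystem K s ^ ((ze j).2 s)) ^ e j := by
          refine Finset.prod_congr rfl fun j _ => ?_
          conv_lhs => rw [hze j]
      _ = (∏ j, ((ze j).1 : (𝓞 K)ˣ) ^ e j) * ∏ j, ∏ s, Units.fundSystem K s ^ ((e j : ℤ) * (ze j).2 s) := by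
          rw [← Finset.prod_mul_distrib]
          refine Finset.prod_congr rfl fun j _ => ?_
          rw [mul_pow, ← Finset.prod_pow]
          congr 1
          refine Finset.prod_congr rfl fun s _ => ?_
          rw [mul_comm, zpow_mul, zpow_natCast]
      _ = _ := by
          rw [Finset.prod_comm, ← Finset.prod_pow]
          congr 1
          refine Finset.prod_congr rfl fun s _ => ?_
          have h9 : ∀ (g : (𝓞 K)ˣ) (w : Fin N → ℤ), ∏ j, g ^ w j = g ^ (∑ j, w j) := fun g w =>
            (map_sum (zmultiplesHom (Additive (𝓞 K)ˣ) (Additive.ofMul g)) w Finset.univ).symm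
          rw [h9, hq, mul_comm, zpow_mul, zpow_natCast]
  have h5 : ∏ j, x j ^ (h' * e j) = ((∏ j, v j ^ e j : (𝓞 K)ˣ) : 𝓞 K) * (∏ j, d j ^ e j) ^ p := by
    push_cast
    rw [← Finset.prod_pow, ← Finset.prod_mul_distrib]
    refine Finset.prod_congr rfl fun j _ => ?_
    rw [pow_mul, hvd, mul_pow, ← pow_mul, ← pow_mul, mul_comm p]
  rw [h5, h4]
  push_cast
  ring

lemma multiset_sq_sum (s : Multiset ℂ) : s.sum ^ 2 = (s.map (· ^ 2)).sum + 2 * s.esymm 2 := by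
  induction s using Multiset.induction with
  | empty => simp [Multiset.esymm, Multiset.powersetCard_zero_right]
  | cons a s ih =>
    have : (a ::ₘ s).esymm 2 = s.esymm 2 + a * s.sum := by
      simp [Multiset.esymm, Multiset.powersetCard_cons, Multiset.powersetCard_one]
      simpa using Multiset.sum_map_mul_left (s := s) (a := a) (f := fun x => x)
    rw [this]
    simp only [Multiset.sum_cons, Multiset.map_cons]
    linear_combination ih

theorem rank_bound (K : Type*) [Field K] [NumberField K] (f : ℤ[X]) (pb : PowerBasis ℚ K)
    (hmin : minpoly ℚ pb.gen = f.map (algebraMap ℤ ℚ)) (n : ℕ) (hn : 3 ≤ n) (hmon : f.Monic)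
    (hdeg : f.natDegree = n) (h1 : f.coeff (n - 1) = 0) (h2 : 0 < f.coeff (n - 2)) :
    Units.rank K < n - 1 := by
  have hfr : Module.finrank ℚ K = n := by
    rw [pb.finrank, ← pb.natDegree_minpoly, hmin, hmon.natDegree_map, hdeg]
  have hc : 0 < InfinitePlace.nrComplexPlaces K := by
    by_contra! hc
    have hc0 : InfinitePlace.nrComplexPlaces K = 0 := by omega
    have hreal : ∀ φ : K →+* ℂ, ComplexEmbedding.IsReal φ := by
      classical
      intro φ
      by_contra hφ
      have := InfinitePlace.card_complex_embeddings K
      rw [hc0] at this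
      have := Fintype.card_eq_zero_iff.mp this
      exact this.false ⟨φ, hφ⟩
    set g : ℂ[X] := f.map (algebraMap ℤ ℂ) with hg
    have hgm : g.Monic := hmon.map _
    have hgd : g.natDegree = n := by rw [hg, hmon.natDegree_map, hdeg]
    have hcard : g.roots.card = g.natDegree := (IsAlgClosed.splits g).natDegree_eq_card_roots.symm
    have hroots : ∀ r ∈ g.roots, r.im = 0 := by
      intro r hr
      have hr' := (mem_roots'.mp hr).2
      have hr2 : aeval r (minpoly ℚ pb.gen) = 0 := by
        rw [hmin, aeval_map_algebraMap]
        rw [IsRoot.def, hg, eval_map] at hr'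
        exact hr'
      have h3 := hreal (pb.lift r hr2 : K →+* ℂ)
      have h4 := ComplexEmbedding.isReal_iff.mp h3
      have h5 := RingHom.congr_fun h4 pb.gen
      have h6 : (pb.lift r hr2 : K →+* ℂ) pb.gen = r := pb.lift_gen r hr2
      rw [ComplexEmbedding.conjugate_coe_eq, h6] at h5
      exact Complex.conj_eq_iff_im.mp h5
    have e1 := coeff_eq_esymm_roots_of_card hcard (k := n - 1) (by omega)
    have e2 := coeff_eq_esymm_roots_of_card hcard (k := n - 2) (by omega)
    rw [hgd, hgm.leadingCoeff, show n - (n - 1) = 1 by omega, hg, coeff_map, h1, ← hg] at e1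
    rw [hgd, hgm.leadingCoeff, show n - (n - 2) = 2 by omega, hg, coeff_map, ← hg] at e2
    simp [Multiset.esymm, Multiset.powersetCard_one] at e1
    have e3 := multiset_sq_sum g.roots
    rw [e1] at e3
    have e4 : 0 ≤ ((g.roots.map (· ^ 2)).sum).re := by
      have : ((g.roots.map (· ^ 2)).sum).re = (g.roots.map (fun z => (z ^ 2).re)).sum := by
        have := map_multiset_sum Complex.reAddGroupHom (g.roots.map (· ^ 2))
        rw [Multiset.map_map] at this
        exact this
      rw [this]
      apply Multiset.sum_nonneg
      intro x hx
      obtain ⟨z, hz, rfl⟩ := Multiset.mem_map.mp hx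
      have := hroots z hz
      simp only [sq, Complex.mul_re, this, mul_zero, sub_zero]
      exact mul_self_nonneg _
    have e5 := congrArg Complex.re e3
    have e6 : (g.roots.esymm 2) = ((f.coeff (n - 2) : ℝ) : ℂ) := by
      simpa using e2.symm
    rw [e6] at e5
    simp at e5
    have : (0:ℝ) < f.coeff (n-2) := by exact_mod_cast h2
    linarith
  have h7 := InfinitePlace.card_add_two_mul_card_eq_rank K
  have h8 := InfinitePlace.card_eq_nrRealPlaces_add_nrComplexPlaces K
  unfold Units.rank
  omega

theorem dvd_classNumber (K : Type*) [Field K] [NumberField K] (f : ℤ[X]) (pb : PowerBasis ℚ K)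
    (hmin : minpoly ℚ pb.gen = f.map (algebraMap ℤ ℚ)) (n : ℕ) (hn : 3 ≤ n) (hmon : f.Monic)
    (hdeg : f.natDegree = n) (h1 : f.coeff (n - 1) = 0) (h2 : 0 < f.coeff (n - 2))
    (l : ℕ) (hl : 1 ≤ l) (a u : Fin (n - 1) → ℤ) (hfa : ∀ j, f.eval (a j) = u j ^ l)
    (hcop : ∀ j, IsCoprime (f.derivative.eval (a j)) (u j))
    (hloc : ∀ p : ℕ, p.Prime → p ∣ l → ∀ i, ∃ (Q : ℕ) (_ : Fact Q.Prime), p * (2 * n).factorial ∣ Q - 1 ∧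
      ∃ x : ZMod Q, aeval x f = 0 ∧ aeval x (derivative f) ≠ 0 ∧
        (∀ j, j ≠ i → (x - (a j : ZMod Q)) ^ ((Q - 1) / p) = 1) ∧ x - (a i : ZMod Q) ≠ 0 ∧
        (x - (a i : ZMod Q)) ^ ((Q - 1) / p) ≠ 1) : l ∣ classNumber K := by
  have hfr : Module.finrank ℚ K = n := by
    rw [pb.finrank, ← pb.natDegree_minpoly, hmin, hmon.natDegree_map, hdeg]
  have hroot : aeval pb.gen f = 0 := by
    have := minpoly.aeval ℚ pb.gen
    rwa [hmin, aeval_map_algebraMap] at this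
  have hint : IsIntegral ℤ pb.gen := ⟨f, hmon, hroot⟩
  obtain ⟨θ, hθ⟩ : ∃ θ : 𝓞 K, (θ : K) = pb.gen := ⟨⟨pb.gen, hint⟩, rfl⟩
  have hθroot : aeval θ f = 0 := by
    apply RingOfIntegers.coe_injective
    have := aeval_algebraMap_apply K θ f
    rw [show algebraMap (𝓞 K) K θ = pb.gen from hθ, hroot] at this
    rw [← this]; simp
  have hx0 : ∀ j, θ - (a j : 𝓞 K) ≠ 0 := by
    intro j hj
    have h3 : pb.gen = algebraMap ℚ K (a j : ℚ) := by
      rw [← hθ, sub_eq_zero.mp hj]; simp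
    have h4 : (minpoly ℚ pb.gen).natDegree = 1 := by
      rw [h3, minpoly.eq_X_sub_C]; exact natDegree_X_sub_C _
    rw [hmin, hmon.natDegree_map, hdeg] at h4
    omega
  by_contra hnd
  obtain ⟨p, hp, hpl, e, ⟨i, hi⟩, z, g, hz, hprod⟩ := class_number_step K (n - 1)
    (rank_bound K f pb hmin n hn hmon hdeg h1 h2) l (fun j => θ - (a j : 𝓞 K)) hx0
    (fun j => ideal_pow_of_root (𝓞 K) f θ hθroot (a j) (u j) l (hfa j) (hcop j)) hl hnd
  obtain ⟨Q, hQ, hQdvd, x, hx1, hx2, hx3, hx4, hx5⟩ := hloc p hp hpl i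
  obtain ⟨φ, hφ⟩ := hensel_hom K f pb hmin θ hθ Q x hx1 hx2
  set M := (Q - 1) / p with hM
  have hpQ : p ∣ Q - 1 := dvd_of_mul_right_dvd hQdvd
  have hpM : M * p = Q - 1 := Nat.div_mul_cancel hpQ
  have hQ2 := hQ.out.two_le
  have hM0 : M ≠ 0 := by
    rintro h; rw [h] at hpM; omega
  have hWM : (2 * n).factorial ∣ M := by
    rw [mul_comm, ← hpM] at hQdvd
    exact Nat.dvd_of_mul_dvd_mul_right hp.pos hQdvd
  have hzW : (z : 𝓞 K) ^ (2 * n).factorial = 1 := by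
    rw [NumberField.Units.torsion, CommGroup.mem_torsion, isOfFinOrder_iff_pow_eq_one] at hz
    obtain ⟨m, hm, hzm⟩ := hz
    apply RingOfIntegers.coe_injective
    have := torsion_bound K n hfr ((z : 𝓞 K) : K) m hm (by
      have h := congrArg (fun w : (𝓞 K)ˣ => ((w : 𝓞 K) : K)) hzm
      simpa using h)
    simpa using this
  have hφz : φ z ^ M = 1 := by
    obtain ⟨c, hc⟩ := hWM
    rw [hc, pow_mul, ← map_pow, hzW, map_one, one_pow]
  have heq := congrArg φ hprod
  simp only [map_prod, map_pow, map_sub, map_mul, map_intCast, hφ] at heq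
  have hne : ∀ j, x - (a j : ZMod Q) ≠ 0 := by
    intro j
    by_cases hj : j = i
    · rw [hj]; exact hx4
    · intro h0
      have := hx3 j hj
      rw [h0, zero_pow hM0] at this
      exact zero_ne_one this
  have hg0 : φ g ≠ 0 := by
    intro h0
    rw [h0, zero_pow hp.ne_zero, mul_zero, Finset.prod_eq_zero_iff] at heq
    obtain ⟨j, -, hj⟩ := heq
    exact pow_ne_zero _ (hne j) hj
  have heq2 := congrArg (· ^ M) heq
  simp only [mul_pow, hφz, one_mul] at heq2
  rw [← pow_mul, mul_comm p, hpM, ZMod.pow_card_sub_one_eq_one hg0, ← Finset.prod_pow,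
    Finset.prod_eq_single i] at heq2
  · apply hx5
    set y := (x - (a i : ZMod Q)) ^ M with hy
    have hyp : y ^ p = 1 := by
      rw [hy, ← pow_mul, hpM, ZMod.pow_card_sub_one_eq_one hx4]
    have hye : y ^ e i = 1 := by
      rw [hy, ← pow_mul, mul_comm, pow_mul]; exact heq2
    have hco : Nat.Coprime p (e i) := (Nat.Prime.coprime_iff_not_dvd hp).mpr hi
    have := Nat.dvd_gcd (orderOf_dvd_of_pow_eq_one hyp) (orderOf_dvd_of_pow_eq_one hye)
    rw [hco.gcd_eq_one, Nat.dvd_one, orderOf_eq_one_iff] at this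
    exact this
  · intro j _ hj
    rw [← pow_mul, mul_comm, pow_mul, hx3 j hj, one_pow]
  · simp
end PartF

section PartG
open Polynomial NumberField

theorem prime_dvd_discr (K : Type*) [Field K] [NumberField K] (f : ℤ[X]) (pb : PowerBasis ℚ K)
    (hmin : minpoly ℚ pb.gen = f.map (algebraMap ℤ ℚ)) (n : ℕ) (hn : 3 ≤ n) (hmon : f.Monic)
    (hdeg : f.natDegree = n) (q : ℕ) (hq : q.Prime) (hqc : ∀ k < n, (q : ℤ) ∣ f.coeff k)
    (hq0 : ¬ (q : ℤ) ^ 2 ∣ f.coeff 0) : (q : ℤ) ∣ discr K := by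
  have hqZ : Prime (q : ℤ) := Nat.prime_iff_prime_int.mp hq
  have hroot : aeval pb.gen f = 0 := by
    have := minpoly.aeval ℚ pb.gen
    rwa [hmin, aeval_map_algebraMap] at this
  have hint : IsIntegral ℤ pb.gen := ⟨f, hmon, hroot⟩
  obtain ⟨θ, hθ⟩ : ∃ θ : 𝓞 K, (θ : K) = pb.gen := ⟨⟨pb.gen, hint⟩, rfl⟩
  have hθroot : aeval θ f = 0 := by
    apply RingOfIntegers.coe_injective
    have := aeval_algebraMap_apply K θ f
    rw [show algebraMap (𝓞 K) K θ = pb.gen from hθ, hroot] at this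
    rw [← this]; simp
  have htop : Ideal.span {(q : 𝓞 K)} ≠ ⊤ := by
    intro h
    rw [Ideal.span_singleton_eq_top] at h
    have h2 := h.map (Algebra.norm ℤ)
    have h3 : (q : 𝓞 K) = algebraMap ℤ (𝓞 K) q := by simp
    rw [h3, Algebra.norm_algebraMap] at h2
    have h4 : Module.finrank ℤ (𝓞 K) ≠ 0 := Module.finrank_pos.ne'
    exact hqZ.not_isUnit ((isUnit_pow_iff h4).mp h2)
  obtain ⟨P, hPmax, hqP⟩ := Ideal.exists_le_maximal _ htop
  have hqP' : (q : 𝓞 K) ∈ P := hqP (Ideal.mem_span_singleton_self _)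
  have hcP : ∀ k < n, ((f.coeff k : ℤ) : 𝓞 K) ∈ P := by
    intro k hk
    obtain ⟨c, hc⟩ := hqc k hk
    rw [hc]; push_cast
    exact P.mul_mem_right _ hqP'
  have hθP : θ ∈ P := by
    apply hPmax.isPrime.mem_of_pow_mem n
    rw [aeval_eq_sum_range, hdeg, Finset.sum_range_succ] at hθroot
    have hl : f.coeff n = 1 := by rw [← hdeg]; exact hmon.coeff_natDegree
    rw [hl, one_smul] at hθroot
    rw [eq_neg_of_add_eq_zero_right hθroot]
    refine P.neg_mem (P.sum_mem fun k hk => ?_)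
    rw [zsmul_eq_mul]
    exact P.mul_mem_right _ (hcP k (Finset.mem_range.mp hk))
  have hP2 : (q : 𝓞 K) ∈ P ^ 2 := by
    obtain ⟨m, hm⟩ := hqc 0 (by omega)
    have hcop : IsCoprime m (q : ℤ) := by
      rw [isCoprime_comm]
      apply (Prime.coprime_iff_not_dvd hqZ).mpr
      rintro ⟨c, hc⟩
      exact hq0 ⟨c, by rw [hm, hc]; ring⟩
    obtain ⟨x, y, hxy⟩ := hcop
    have h1 : (aeval θ f.divX) * θ = - ((q : 𝓞 K) * m) := by
      have := congrArg (aeval θ) (divX_mul_X_add f)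
      rw [hθroot, map_add, map_mul, aeval_X, aeval_C, hm] at this
      have h5 := eq_neg_of_add_eq_zero_left this
      rw [h5]; simp
    have h2 : aeval θ f.divX ∈ P := by
      rw [aeval_eq_sum_range' (n := n) (by rw [natDegree_divX_eq_natDegree_tsub_one, hdeg]; omega)]
      refine P.sum_mem fun k hk => ?_
      rw [coeff_divX, zsmul_eq_mul]
      have hk' := Finset.mem_range.mp hk
      by_cases hk2 : k + 1 < n
      · exact P.mul_mem_right _ (hcP _ hk2)
      · exact P.mul_mem_left _ (P.pow_mem_of_mem hθP _ (by omega))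
    have h3 : (q : 𝓞 K) * m ∈ P ^ 2 := by
      rw [← neg_neg ((q : 𝓞 K) * m), ← h1, sq]
      exact (P * P).neg_mem (Ideal.mul_mem_mul h2 hθP)
    have h4 : (q : 𝓞 K) = (x : 𝓞 K) * ((q : 𝓞 K) * m) + y * ((q : 𝓞 K) * q) := by
      have := congrArg (fun z : ℤ => (z : 𝓞 K)) hxy
      push_cast at this
      linear_combination (-(q : 𝓞 K)) * this
    rw [h4]
    refine Ideal.add_mem _ (Ideal.mul_mem_left _ _ h3) (Ideal.mul_mem_left _ _ ?_)
    rw [sq]; exact Ideal.mul_mem_mul hqP' hqP'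
  by_contra hnd
  rw [not_dvd_discr_iff_forall_mem K (𝓞 K) hqZ] at hnd
  have hun := hnd P hPmax.isPrime (by simpa using hqP')
  have := hPmax.isPrime
  rw [← not_dvd_differentIdeal_iff] at hun
  apply hun
  have hmaxq : (Ideal.span {(q : ℤ)}).IsMaximal :=
    PrincipalIdealRing.isMaximal_of_irreducible hqZ.irreducible
  have := pow_sub_one_dvd_differentIdeal ℤ (p := Ideal.span {(q : ℤ)}) P 2
    (by rw [Ne, Ideal.span_singleton_eq_bot]; exact hqZ.ne_zero) (by
      rw [Ideal.map_span, Set.image_singleton, Ideal.dvd_span_singleton]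
      simpa using hP2)
  simpa using this
end PartG

section PartH
open Polynomial NumberField

theorem discr_le_norm (K : Type*) [Field K] [NumberField K] (pb : PowerBasis ℚ K)
    (hint : IsIntegral ℤ pb.gen) :
    |(discr K : ℚ)| ≤ |Algebra.norm ℚ (aeval pb.gen (derivative (minpoly ℚ pb.gen)))| := by
  classical
  let e : Module.Free.ChooseBasisIndex ℤ (𝓞 K) ≃ Fin pb.dim :=
    (integralBasis K).indexEquiv pb.basis
  obtain ⟨θ, hθ⟩ : ∃ θ : 𝓞 K, (θ : K) = pb.gen := ⟨⟨pb.gen, hint⟩, rfl⟩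
  let v : Module.Free.ChooseBasisIndex ℤ (𝓞 K) → K := pb.basis ∘ e
  let P : Matrix (Module.Free.ChooseBasisIndex ℤ (𝓞 K)) (Module.Free.ChooseBasisIndex ℤ (𝓞 K)) ℤ :=
    (RingOfIntegers.basis K).toMatrix (fun i => θ ^ (e i : ℕ))
  have hP : (integralBasis K).toMatrix v = P.map (Int.castRingHom ℚ) := by
    ext i j
    simp only [Module.Basis.toMatrix_apply, Matrix.map_apply, P, v, Function.comp_apply]
    have : pb.basis (e j) = algebraMap (𝓞 K) K (θ ^ (e j : ℕ)) := by
      rw [pb.basis_eq_pow, map_pow, ← hθ]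
    rw [this, integralBasis_repr_apply]; rfl
  have h1 : Algebra.discr ℚ v = ((P.det : ℤ) : ℚ) ^ 2 * discr K := by
    rw [coe_discr, ← Module.Basis.toMatrix_map_vecMul (integralBasis K) v,
      Algebra.discr_of_matrix_vecMul, hP]
    congr 2
    exact (RingHom.map_det (Int.castRingHom ℚ) P).symm
  have h2 : Algebra.discr ℚ v = Algebra.discr ℚ pb.basis := Algebra.discr_reindex ℚ pb.basis e.symm
  have h3 : Algebra.discr ℚ v ≠ 0 := by
    rw [h2]; exact Algebra.discr_not_zero_of_basis ℚ pb.basis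
  have h4 : P.det ≠ 0 := by
    intro h; rw [h1, h] at h3; simp at h3
  have h5 : |Algebra.discr ℚ pb.basis| =
      |Algebra.norm ℚ (aeval pb.gen (derivative (minpoly ℚ pb.gen)))| := by
    rw [Algebra.discr_powerBasis_eq_norm, abs_mul, abs_pow]; simp
  rw [← h5, ← h2, h1, abs_mul, abs_pow]
  have h6 : (1 : ℚ) ≤ |((P.det : ℤ) : ℚ)| := by
    exact_mod_cast Int.one_le_abs h4
  nlinarith [abs_nonneg (discr K : ℚ), one_le_pow₀ h6 (n := 2)]

theorem discr_bound (K : Type*) [Field K] [NumberField K] (f : ℤ[X]) (pb : PowerBasis ℚ K)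
    (hmin : minpoly ℚ pb.gen = f.map (algebraMap ℤ ℚ)) (n : ℕ) (hn : 3 ≤ n) (hmon : f.Monic)
    (hdeg : f.natDegree = n) (h1 : f.coeff (n - 1) = 0) (B : ℝ) (hB : 1 ≤ B)
    (hc : ∀ k < n, |(f.coeff k : ℝ)| ≤ B) :
    |(discr K : ℝ)| * |(f.coeff 0 : ℝ)| ≤ ((n : ℝ) ^ 2 * B) ^ n * (((n : ℝ) + 1) * B) ^ (n - 2) := by
  classical
  have hdim : pb.dim = n := by rw [← pb.natDegree_minpoly, hmin, hmon.natDegree_map, hdeg]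
  have hroot : aeval pb.gen f = 0 := by
    have := minpoly.aeval ℚ pb.gen
    rwa [hmin, aeval_map_algebraMap] at this
  have hint : IsIntegral ℤ pb.gen := ⟨f, hmon, hroot⟩
  have hd := discr_le_norm K pb hint
  rw [hmin, derivative_map, aeval_map_algebraMap] at hd
  set N1 := Algebra.norm ℚ (aeval pb.gen (derivative f)) with hN1
  have hN0 : |Algebra.norm ℚ pb.gen| = |(f.coeff 0 : ℚ)| := by
    rw [Algebra.PowerBasis.norm_gen_eq_coeff_zero_minpoly, hmin, coeff_map, abs_mul, abs_pow]
    simp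
  let h : ℤ[X] := C (n : ℤ) * f - X * derivative f
  have hhc : ∀ k, h.coeff k = ((n : ℤ) - k) * f.coeff k := by
    intro k
    simp only [h, coeff_sub, coeff_C_mul]
    cases k with
    | zero => simp
    | succ k => rw [coeff_X_mul, coeff_derivative]; push_cast; ring
  have hhθ : aeval pb.gen h = - (pb.gen * aeval pb.gen (derivative f)) := by
    simp [h, hroot]
  have hN2 : |N1| * |(f.coeff 0 : ℚ)| = |Algebra.norm ℚ (aeval pb.gen h)| := by
    rw [hhθ, ← neg_one_mul, map_mul, map_mul, abs_mul, abs_mul, hN0]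
    have : |Algebra.norm ℚ (-1 : K)| = 1 := by
      have h9 : (-1 : K) = algebraMap ℚ K (-1) := by simp
      rw [h9, Algebra.norm_algebraMap, abs_pow]; simp
    rw [this]; ring
  have hhdeg : h.natDegree < n - 1 := by
    have : h.natDegree ≤ n - 2 := by
      rw [natDegree_le_iff_coeff_eq_zero]
      intro k hk
      rw [hhc]
      rcases lt_trichotomy k n with h3 | h3 | h3
      · rw [show k = n - 1 by omega, h1, mul_zero]
      · rw [h3]; simp
      · rw [coeff_eq_zero_of_natDegree_lt (by omega), mul_zero]
    omega
  have hB0 : 0 ≤ B := by linarith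
  have hhb : ∀ z : ℂ, ‖aeval z h‖ ≤ (n:ℝ) ^ 2 * B * (max 1 ‖z‖) ^ (n - 2) := by
    intro z
    rw [aeval_eq_sum_range' hhdeg]
    refine (norm_sum_le _ _).trans ?_
    have : ∀ k ∈ Finset.range (n - 1), ‖h.coeff k • z ^ k‖ ≤ n * B * (max 1 ‖z‖) ^ (n - 2) := by
      intro k hk
      have hk' := Finset.mem_range.mp hk
      rw [zsmul_eq_mul, norm_mul, norm_pow, hhc]
      have e1 : ‖(((((n : ℤ) - k) * f.coeff k : ℤ)) : ℂ)‖ ≤ n * B := by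
        rw [Complex.norm_intCast]
        push_cast
        rw [abs_mul]
        have : |(n : ℝ) - k| ≤ n := by
          have : (k : ℝ) ≤ n := by exact_mod_cast (by omega : k ≤ n)
          rw [abs_le]; constructor <;> linarith [Nat.cast_nonneg (α := ℝ) k]
        have := hc k (by omega)
        gcongr
      have e2 : ‖z‖ ^ k ≤ (max 1 ‖z‖) ^ (n - 2) :=
        (pow_le_pow_left₀ (norm_nonneg _) (le_max_right _ _) _).trans
          (pow_le_pow_right₀ (le_max_left _ _) (by omega))
      gcongr
    refine (Finset.sum_le_sum this).trans ?_
    rw [Finset.sum_const, Finset.card_range, nsmul_eq_mul]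
    have : ((n - 1 : ℕ) : ℝ) ≤ n := by exact_mod_cast Nat.sub_le n 1
    calc ((n - 1 : ℕ) : ℝ) * (n * B * (max 1 ‖z‖) ^ (n - 2)) ≤ n * (n * B * (max 1 ‖z‖) ^ (n - 2)) := by gcongr
      _ = _ := by ring
  have hprodmax : ∏ σ : K →ₐ[ℚ] ℂ, max 1 ‖σ pb.gen‖ ≤ ((n : ℝ) + 1) * B := by
    set g : ℂ[X] := (minpoly ℚ pb.gen).map (algebraMap ℚ ℂ) with hg
    have hgf : g = f.map (algebraMap ℤ ℂ) := by
      rw [hg, hmin, Polynomial.map_map]; congr 1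
    have hgm : g.Monic := by rw [hgf]; exact hmon.map _
    have e1 : ∏ σ : K →ₐ[ℚ] ℂ, max 1 ‖σ pb.gen‖ = (g.roots.map (fun a ↦ max 1 ‖a‖)).prod := by
      rw [Fintype.prod_equiv pb.liftEquiv' _ (fun y => max 1 ‖(y : ℂ)‖)
        (fun σ => by rw [pb.liftEquiv'_apply_coe])]
      rw [Finset.prod_mem_multiset _ _ (fun y => max 1 ‖y‖) (fun _ => rfl), Finset.prod_eq_multiset_prod,
        Multiset.toFinset_val, Multiset.dedup_eq_self.mpr]
      exact nodup_roots (Separable.map (Algebra.IsSeparable.isSeparable ℚ pb.gen))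
    rw [e1]
    refine (prod_max_one_norm_roots_le_mahlerMeasure_of_one_le_leadingCoeff
      (by rw [hgm.leadingCoeff]; simp)).trans ((mahlerMeasure_le_sum_norm_coeff g).trans ?_)
    rw [Polynomial.sum_over_range _ (by simp), hgf, hmon.natDegree_map, hdeg, Finset.sum_range_succ]
    have e2 : ∀ k ∈ Finset.range n, ‖(f.map (algebraMap ℤ ℂ)).coeff k‖ ≤ B := by
      intro k hk
      rw [coeff_map]
      have := hc k (Finset.mem_range.mp hk)
      simpa using this
    have e3 := Finset.sum_le_sum e2
    rw [Finset.sum_const, Finset.card_range, nsmul_eq_mul] at e3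
    have e4 : ‖(f.map (algebraMap ℤ ℂ)).coeff n‖ = 1 := by
      rw [coeff_map, ← hdeg, hmon.coeff_natDegree]; simp
    rw [e4]
    linarith
  have hfin : ((|Algebra.norm ℚ (aeval pb.gen h)| : ℚ) : ℝ) ≤
      ((n : ℝ) ^ 2 * B) ^ n * (((n : ℝ) + 1) * B) ^ (n - 2) := by
    have e1 := Algebra.norm_eq_prod_embeddings ℚ ℂ (aeval pb.gen h)
    have e2 : ((|Algebra.norm ℚ (aeval pb.gen h)| : ℚ) : ℝ) = ∏ σ : K →ₐ[ℚ] ℂ, ‖σ (aeval pb.gen h)‖ := by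
      rw [← norm_prod, ← e1]
      simp
    rw [e2]
    calc ∏ σ : K →ₐ[ℚ] ℂ, ‖σ (aeval pb.gen h)‖
        ≤ ∏ σ : K →ₐ[ℚ] ℂ, ((n:ℝ) ^ 2 * B * (max 1 ‖σ pb.gen‖) ^ (n - 2)) := by
          refine Finset.prod_le_prod (fun _ _ => norm_nonneg _) fun σ _ => ?_
          have : σ (aeval pb.gen h) = aeval (σ pb.gen) h :=
            (aeval_algHom_apply (σ.restrictScalars ℤ) pb.gen h).symm
          rw [this]; exact hhb _
      _ = ((n : ℝ) ^ 2 * B) ^ n * (∏ σ : K →ₐ[ℚ] ℂ, max 1 ‖σ pb.gen‖) ^ (n - 2) := by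
          rw [Finset.prod_mul_distrib, Finset.prod_const, Finset.prod_pow, Finset.card_univ, AlgHom.card,
            pb.finrank, hdim]
      _ ≤ _ := by
          gcongr
  refine le_trans ?_ hfin
  rw [← hN2]
  push_cast
  have hd' : |(discr K : ℝ)| ≤ |(N1 : ℝ)| := by
    have := (Rat.cast_le (K := ℝ)).mpr hd
    simpa using this
  exact mul_le_mul_of_nonneg_right hd' (abs_nonneg _)
end PartH

section PartI
open Polynomial
section Fam
variable {ι : Type*} [Fintype ι] [DecidableEq ι] {R : Type*} [CommRing R] {R' : Type*} [CommRing R']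
def famM (a : ι → R) (j : ι) : R := ∏ k ∈ Finset.univ.erase j, (a j - a k)
noncomputable def famL (a : ι → R) (j : ι) : R[X] := ∏ k ∈ Finset.univ.erase j, (X - C (a k))
def famPsi (l : ℕ) (y z : R) : R := ∑ k ∈ Finset.range l, (y+z)^k * y^(l-1-k)
def famU (n l : ℕ) (α κ : ι → R) (s : R) (j : ι) : R := α j ^ n + κ j * s * famM (fun k => α k ^ l) j
def famS (n l : ℕ) (α κ : ι → R) (s : R) (j : ι) : R :=
  κ j * s * famPsi l (α j ^ n) (κ j * s * famM (fun k => α k ^ l) j)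
noncomputable def famF (n l : ℕ) (α κ : ι → R) (s : R) : R[X] :=
  X ^ n + ∑ j, C (famS n l α κ s j) * famL (fun k => α k ^ l) j

theorem famPsi_mul (l : ℕ) (y z : R) : z * famPsi l y z = (y+z)^l - y^l := by
  have := geom_sum₂_mul (y+z) y l
  unfold famPsi
  rw [mul_comm, ← this]; ring

theorem famS_mul (n l : ℕ) (α κ : ι → R) (s : R) (j : ι) :
    famS n l α κ s j * famM (fun k => α k ^ l) j = famU n l α κ s j ^ l - (α j ^ l) ^ n := by
  have := famPsi_mul l (α j ^ n) (κ j * s * famM (fun k => α k ^ l) j)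
  unfold famS famU
  rw [← pow_mul, mul_comm l n, pow_mul, ← this]; ring

theorem famL_eval (a : ι → R) (j : ι) : (famL a j).eval (a j) = famM a j := by
  simp [famL, famM, eval_prod]

theorem famL_eval_ne (a : ι → R) (j k : ι) (h : k ≠ j) : (famL a j).eval (a k) = 0 := by
  rw [famL, eval_prod]
  exact Finset.prod_eq_zero (i := k) (by simp [h]) (by simp)

theorem famF_eval (n l : ℕ) (α κ : ι → R) (s : R) (j : ι) :
    (famF n l α κ s).eval (α j ^ l) = famU n l α κ s j ^ l := by
  have h := famS_mul n l α κ s j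
  rw [famF, eval_add, eval_finsetSum, Finset.sum_eq_single j]
  · rw [eval_mul, eval_C, famL_eval (fun k => α k ^ l) j, h]; simp
  · intro b _ hb
    rw [eval_mul, famL_eval_ne (fun k => α k ^ l) b j hb.symm, mul_zero]
  · simp

theorem famM_map (φ : R →+* R') (a : ι → R) (j : ι) : φ (famM a j) = famM (fun k => φ (a k)) j := by
  simp [famM, map_prod]
theorem famL_map (φ : R →+* R') (a : ι → R) (j : ι) : (famL a j).map φ = famL (fun k => φ (a k)) j := by
  simp [famL, Polynomial.map_prod]
theorem famPsi_map (φ : R →+* R') (l : ℕ) (y z : R) : φ (famPsi l y z) = famPsi l (φ y) (φ z) := by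
  simp [famPsi]
theorem famU_map (φ : R →+* R') (n l : ℕ) (α κ : ι → R) (s : R) (j : ι) :
    φ (famU n l α κ s j) = famU n l (fun k => φ (α k)) (fun k => φ (κ k)) (φ s) j := by
  simp [famU, famM_map]
theorem famS_map (φ : R →+* R') (n l : ℕ) (α κ : ι → R) (s : R) (j : ι) :
    φ (famS n l α κ s j) = famS n l (fun k => φ (α k)) (fun k => φ (κ k)) (φ s) j := by
  simp [famS, famM_map, famPsi_map]
theorem famF_map (φ : R →+* R') (n l : ℕ) (α κ : ι → R) (s : R) :
    (famF n l α κ s).map φ = famF n l (fun k => φ (α k)) (fun k => φ (κ k)) (φ s) := by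
  simp only [famF, Polynomial.map_sum, Polynomial.map_add, Polynomial.map_mul, map_C, famL_map, Polynomial.map_pow, map_X, map_pow]
  simp only [← famS_map φ]

theorem famL_natDegree [Nontrivial R] (a : ι → R) (j : ι) : (famL a j).natDegree = Fintype.card ι - 1 := by
  rw [famL, natDegree_prod_of_monic _ _ (fun k _ => monic_X_sub_C _)]
  simp [Finset.card_erase_of_mem]
theorem famL_monic (a : ι → R) (j : ι) : (famL a j).Monic :=
  monic_prod_of_monic _ _ (fun k _ => monic_X_sub_C _)

theorem famL_coeff [Nontrivial R] (a : ι → R) (j : ι) (m : ℕ) (h : Fintype.card ι - 1 < m) : (famL a j).coeff m = 0 :=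
  coeff_eq_zero_of_natDegree_lt (by rwa [famL_natDegree])

theorem famF_coeff [Nontrivial R] (n l : ℕ) (α κ : ι → R) (s : R) (m : ℕ) (hm : m < n):
    (famF n l α κ s).coeff m = ∑ j, famS n l α κ s j * (famL (fun k => α k ^ l) j).coeff m := by
  simp [famF, coeff_X_pow, hm.ne]

theorem famF_sum_deg [Nontrivial R] (n l : ℕ) (hn : 3 ≤ n) (hc : Fintype.card ι = n - 1) (α κ : ι → R) (s : R) :
    (∑ j, C (famS n l α κ s j) * famL (fun k => α k ^ l) j).degree < (n:ℕ) := by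
  refine (degree_sum_le _ _).trans_lt ?_
  rw [Finset.sup_lt_iff (by exact WithBot.bot_lt_coe n)]
  intro j _
  refine (degree_mul_le _ _).trans_lt ?_
  have h1 : (C (famS n l α κ s j)).degree ≤ 0 := degree_C_le
  have h2 : (famL (fun k => α k ^ l) j).degree ≤ ((n-2:ℕ):WithBot ℕ) := by
    refine degree_le_of_natDegree_le ?_
    rw [famL_natDegree, hc]; omega
  refine (add_le_add h1 h2).trans_lt ?_
  rw [zero_add]; exact_mod_cast (by omega : n-2 < n)

theorem famF_monic [Nontrivial R] (n l : ℕ) (hn : 3 ≤ n) (hc : Fintype.card ι = n - 1) (α κ : ι → R) (s : R) :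
    (famF n l α κ s).Monic := by
  refine monic_X_pow_add (famF_sum_deg n l hn hc α κ s)

theorem famF_natDegree [Nontrivial R] (n l : ℕ) (hn : 3 ≤ n) (hc : Fintype.card ι = n - 1) (α κ : ι → R) (s : R) :
    (famF n l α κ s).natDegree = n := by
  rw [famF, natDegree_add_eq_left_of_degree_lt, natDegree_X_pow]
  rw [degree_X_pow]; exact famF_sum_deg n l hn hc α κ s

theorem famF_coeff1 [Nontrivial R] (n l : ℕ) (hn : 3 ≤ n) (hc : Fintype.card ι = n - 1) (α κ : ι → R) (s : R) :
    (famF n l α κ s).coeff (n-1) = 0 := by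
  rw [famF_coeff _ _ _ _ _ _ (by omega)]
  refine Finset.sum_eq_zero fun j _ => ?_
  rw [famL_coeff _ _ _ (by omega), mul_zero]

theorem famF_coeff2 [Nontrivial R] (n l : ℕ) (hn : 3 ≤ n) (hc : Fintype.card ι = n - 1) (α κ : ι → R) (s : R) :
    (famF n l α κ s).coeff (n-2) = ∑ j, famS n l α κ s j := by
  rw [famF_coeff _ _ _ _ _ _ (by omega)]
  refine Finset.sum_congr rfl fun j _ => ?_
  have := (famL_monic (fun k => α k ^ l) j).coeff_natDegree
  rw [famL_natDegree, hc, show n-1-1 = n-2 by omega] at this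
  rw [this, mul_one]

theorem famF_deriv (n l : ℕ) (α κ : ι → R) (s x : R) :
    (derivative (famF n l α κ s)).eval x = n * x^(n-1) + ∑ j, famS n l α κ s j * (derivative (famL (fun k => α k ^ l) j)).eval x := by
  simp [famF, eval_finsetSum, derivative_X_pow]

theorem famL_deriv_ne (a : ι → R) (j k : ι) (h : k ≠ j) :
    (derivative (famL a j)).eval (a k) = ∏ i ∈ (Finset.univ.erase j).erase k, (a k - a i) := by
  rw [famL, ← Finset.mul_prod_erase _ _ (show k ∈ Finset.univ.erase j by simp [h])]
  simp [derivative_mul, eval_prod]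

end Fam
end PartI

section PartJ
open Polynomial
theorem exists_nonres (Q p : ℕ) [Fact Q.Prime] (hp : p.Prime) (hd : p ∣ Q - 1) :
    ∃ t : ZMod Q, t ≠ 0 ∧ t ^ ((Q-1)/p) ≠ 1 := by
  obtain ⟨g, hg⟩ := IsCyclic.exists_generator (α := (ZMod Q)ˣ)
  refine ⟨g, g.ne_zero, fun h => ?_⟩
  have h' : g ^ ((Q-1)/p) = 1 := by ext; push_cast; exact h
  have ho : orderOf g = Q - 1 := by
    rw [orderOf_eq_card_of_forall_mem_zpowers hg, Nat.card_eq_fintype_card, ZMod.card_units]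
  have := orderOf_dvd_of_pow_eq_one h'
  rw [ho] at this
  have hQ : 0 < Q - 1 := by have := (Fact.out : Q.Prime).two_le; omega
  obtain ⟨c, hc⟩ := hd
  have hc0 : 0 < c := by
    rcases Nat.eq_zero_or_pos c with h | h
    · subst h; omega
    · exact h
  rw [hc, Nat.mul_div_cancel_left _ hp.pos] at this
  have := Nat.le_of_dvd hc0 this
  have := hp.two_le
  nlinarith

theorem exists_x (p : ℕ) (hp : p.Prime) : ∃ B : ℕ, ∀ Q : ℕ, ∀ _ : Fact Q.Prime, B < Q → p ∣ Q - 1 →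
    ∀ E : Finset (ZMod Q), E.card ≤ 3 → ∃ x : ZMod Q, x ≠ 0 ∧ x ∉ E ∧ x ^ ((Q-1)/p) ≠ 1 ∧ x - 1 ≠ 0 ∧ (x-1)^((Q-1)/p) = 1 := by
  obtain ⟨B, hB⟩ := three_term p hp.pos 3
  refine ⟨B, fun Q hQ hBQ hd E hE => ?_⟩
  obtain ⟨t, ht0, ht⟩ := exists_nonres Q p hp hd
  obtain ⟨r, s, hr, hs, h, hE'⟩ := hB Q hQ hBQ t (-1) 1 ht0 (by simp) one_ne_zero (E.image (fun e => e / t)) (Finset.card_image_le.trans hE)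
  have hx : t * r^p - 1 = s^p := by linear_combination h
  have hpow : ∀ y : ZMod Q, y ≠ 0 → (y^p)^((Q-1)/p) = 1 := by
    intro y hy
    rw [← pow_mul, Nat.mul_div_cancel' hd]; exact ZMod.pow_card_sub_one_eq_one hy
  refine ⟨t * r^p, mul_ne_zero ht0 (pow_ne_zero _ hr), fun hm => hE' ?_, ?_, ?_, ?_⟩
  · exact Finset.mem_image.2 ⟨_, hm, by field_simp⟩
  · rw [mul_pow, hpow r hr, mul_one]; exact ht
  · rw [hx]; exact pow_ne_zero _ hs
  · rw [hx]; exact hpow s hs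

theorem famPsi_zero_right {R : Type*} [CommRing R] (l : ℕ) (y : R) : famPsi l y 0 = l * y^(l-1) := by
  unfold famPsi
  rw [add_zero, Finset.sum_congr rfl (g := fun _ => y^(l-1)), Finset.sum_const, Finset.card_range, nsmul_eq_mul]
  intro k hk
  rw [← pow_add]; congr 1; have := Finset.mem_range.1 hk; omega

theorem local4 {F : Type*} [Field F] {ι : Type*} [Fintype ι] [DecidableEq ι] (n l : ℕ) (hn : 4 ≤ n) (hl : 1 ≤ l)
    (hc : Fintype.card ι = n - 1) (hlF : (l:F) ≠ 0) (i : ι) (x : F) (hx0 : x ≠ 0) (hx1 : x - 1 ≠ 0) (hx2 : 2 * x - (n-1) ≠ 0) :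
    ∃ (κ : ι → F) (s : F),
      (famF n l (fun j => if j = i then 0 else 1) κ s).eval x = 0 ∧
      (derivative (famF n l (fun j => if j = i then 0 else 1) κ s)).eval x ≠ 0 ∧
      ∀ j, famU n l (fun j => if j = i then 0 else 1) κ s j ≠ 0 ∨
       (derivative (famF n l (fun j => if j = i then 0 else 1) κ s)).eval ((if j = i then 0 else 1)^l) ≠ 0 := by
  obtain ⟨k, hk⟩ : ∃ k, k ≠ i := by
    have : 1 < Fintype.card ι := by omega
    have := Fintype.one_lt_card_iff_nontrivial.1 this
    exact exists_ne i
  obtain ⟨k', hk'⟩ : ∃ k', k' ∉ ({i, k} : Finset ι) := by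
    by_contra! h
    have : Finset.univ ⊆ ({i,k} : Finset ι) := fun y _ => h y
    have := Finset.card_le_card this
    have := Finset.card_le_two (a := i) (b := k)
    rw [Finset.card_univ] at *
    omega
  simp only [Finset.mem_insert, Finset.mem_singleton, not_or] at hk'
  set α : ι → F := fun j => if j = i then 0 else 1 with hα
  obtain ⟨m, rfl⟩ : ∃ m, n = m + 4 := ⟨n-4, by omega⟩
  set S : F := - x^(m+3) / (x-1)^(m+1) with hS
  set κ : ι → F := fun j => if j = k then 1 else 0 with hκ
  have hl0 : l ≠ 0 := by omega
  have ha : (fun j => α j ^ l) = α := by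
    ext j; simp only [hα]; split_ifs <;> simp [hl0]
  have hM : famM α k = 0 := by
    rw [famM]
    exact Finset.prod_eq_zero (i := k') (by simp [hk']) (by simp [hα, hk, hk'])
  have hSj : ∀ j, famS (m+4) l α κ (S/l) j = if j = k then S else 0 := by
    intro j
    split_ifs with h
    · subst h
      rw [famS, ha, hM, mul_zero, famPsi_zero_right]
      simp [hκ, hα, hk, div_mul_cancel₀ _ hlF]
    · simp [famS, hκ, h]
  have hL : famL α k = X * (X - 1)^(m+1) := by
    rw [famL, ← Finset.mul_prod_erase _ _ (show i ∈ Finset.univ.erase k by simp [hk.symm])]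
    rw [Finset.prod_congr rfl (g := fun _ => (X - 1 : F[X]))]
    · rw [Finset.prod_const, Finset.card_erase_of_mem (by simp [hk.symm]), Finset.card_erase_of_mem (by simp), Finset.card_univ, hc]
      simp [hα]
    · intro j hj
      simp at hj
      simp [hα, hj.1]
  have hF : famF (m+4) l α κ (S/l) = X^(m+4) + C S * (X * (X-1)^(m+1)) := by
    rw [famF, ha]
    simp only [hSj]
    rw [Finset.sum_eq_single k]
    · rw [hL]; simp
    · intro b _ hb; simp [hb]
    · simp
  have hD : ∀ y, (derivative (famF (m+4) l α κ (S/l))).eval y = (m+4) * y^(m+3) + S * ((y-1)^(m+1) + y * ((m+1)*(y-1)^m)) := by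
    intro y
    rw [hF]
    simp [derivative_pow, derivative_mul]
  have hS0 : S ≠ 0 := by
    rw [hS]; exact div_ne_zero (neg_ne_zero.2 (pow_ne_zero _ hx0)) (pow_ne_zero _ hx1)
  have hSx : S * (x-1)^(m+1) = - x^(m+3) := by
    rw [hS, div_mul_cancel₀ _ (pow_ne_zero _ hx1)]
  refine ⟨κ, S/l, ?_, ?_, ?_⟩
  · rw [hF]; simp; linear_combination x * hSx
  · rw [hD]
    intro h
    have : x^(m+3) * (2 * x - ((m+4:ℕ) - 1)) = 0 := by
      push_cast
      linear_combination (x-1) * h - (x - 1) * hSx - x * (m+1) * hSx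
    exact mul_ne_zero (pow_ne_zero _ hx0) hx2 this
  · intro j
    by_cases hj : j = i
    · right
      rw [hD]
      simp [hj, hl0, hS0]
    · left
      rw [famU, ha]
      by_cases hjk : j = k
      · subst hjk; rw [hM]; simp [hα, hj]
      · simp [hκ, hjk, hα, hj]

theorem local3 {F : Type*} [Field F] {ι : Type*} [Fintype ι] [DecidableEq ι] (l : ℕ) (hl : 1 ≤ l)
    (hc : Fintype.card ι = 2) (i : ι) (x u u' : F) (hx0 : x ≠ 0) (hu : u ≠ 0) (hu' : u' ≠ 0)
    (h : u^l * (1 - x) + u'^l * x = x * (1 - x^2)) (h2 : u^l ≠ 2 * x^3) :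
    ∃ (κ : ι → F) (s : F),
      (famF 3 l (fun j => if j = i then 0 else 1) κ s).eval x = 0 ∧
      (derivative (famF 3 l (fun j => if j = i then 0 else 1) κ s)).eval x ≠ 0 ∧
      ∀ j, famU 3 l (fun j => if j = i then 0 else 1) κ s j ≠ 0 ∨
       (derivative (famF 3 l (fun j => if j = i then 0 else 1) κ s)).eval ((if j = i then 0 else 1)^l) ≠ 0 := by
  obtain ⟨d, hd⟩ : ∃ k, k ≠ i := by
    have : 1 < Fintype.card ι := by omega
    have := Fintype.one_lt_card_iff_nontrivial.1 this
    exact exists_ne i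
  have huniv : (Finset.univ : Finset ι) = {i, d} := by
    symm
    apply Finset.eq_univ_of_card
    rw [hc, Finset.card_pair hd.symm]
  set α : ι → F := fun j => if j = i then 0 else 1 with hα
  set κ : ι → F := fun j => if j = i then -u else u' - 1 with hκ
  have hl0 : l ≠ 0 := by omega
  have ha : (fun j => α j ^ l) = α := by
    ext j; simp only [hα]; split_ifs <;> simp [hl0]
  have hei : Finset.univ.erase i = {d} := by
    rw [huniv]; ext y; simp; grind
  have hed : Finset.univ.erase d = {i} := by
    rw [huniv]; ext y; simp; grind
  have hMi : famM α i = -1 := by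
    rw [famM, hei]; simp [hα, hd]
  have hMd : famM α d = 1 := by
    rw [famM, hed]; simp [hα, hd]
  have hUi : famU 3 l α κ 1 i = u := by
    rw [famU, ha, hMi]; simp [hα, hκ]
  have hUd : famU 3 l α κ 1 d = u' := by
    rw [famU, ha, hMd]; simp [hα, hκ, hd]
  have hSi : famS 3 l α κ 1 i = - u^l := by
    have := famS_mul 3 l α κ 1 i
    rw [ha, hMi, hUi] at this
    simp [hα, hl0] at this
    rw [← this]; ring
  have hSd : famS 3 l α κ 1 d = u'^l - 1 := by
    have := famS_mul 3 l α κ 1 d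
    rw [ha, hMd, hUd] at this
    simp [hα, hd] at this
    rw [← this]
  have hLi : famL α i = X - 1 := by
    rw [famL, hei]; simp [hα, hd]
  have hLd : famL α d = X := by
    rw [famL, hed]; simp [hα]
  have hF : famF 3 l α κ 1 = X^3 + (C (-u^l) * (X - 1) + C (u'^l - 1) * X) := by
    rw [famF, ha, huniv, Finset.sum_pair hd.symm, hSi, hSd, hLi, hLd]
  refine ⟨κ, 1, ?_, ?_, ?_⟩
  · rw [hF]; simp; linear_combination h
  · rw [hF]
    simp [derivative_mul, -C_sub, -C_neg, -map_sub, -map_neg, -map_pow]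
    intro h'
    apply h2
    linear_combination (-x) * h' + h
  · intro j
    left
    have : j ∈ (Finset.univ : Finset ι) := Finset.mem_univ j
    rw [huniv] at this
    simp at this
    rcases this with rfl | rfl
    · rw [hUi]; exact hu
    · rw [hUd]; exact hu'

theorem local_data (n l : ℕ) (hn : 3 ≤ n) (hl : 1 ≤ l) (p : ℕ) (hp : p.Prime) : ∃ B : ℕ, ∀ Q : ℕ, ∀ _ : Fact Q.Prime, B < Q → p ∣ Q - 1 →
    ∀ i : Fin (n-1), ∃ (κ : Fin (n-1) → ZMod Q) (s x : ZMod Q),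
      (famF n l (fun j => if j = i then 0 else 1) κ s).eval x = 0 ∧
      (derivative (famF n l (fun j => if j = i then 0 else 1) κ s)).eval x ≠ 0 ∧
      x ≠ 0 ∧ x ^ ((Q-1)/p) ≠ 1 ∧ (x-1)^((Q-1)/p) = 1 ∧
      ∀ j, famU n l (fun j => if j = i then 0 else 1) κ s j ≠ 0 ∨
       (derivative (famF n l (fun j => if j = i then 0 else 1) κ s)).eval ((if j = i then 0 else 1)^l) ≠ 0 := by
  obtain ⟨B1, hB1⟩ := exists_x p hp
  obtain ⟨B2, hB2⟩ := three_term l hl 1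
  refine ⟨B1 + B2 + l + 2, fun Q hQ hBQ hd i => ?_⟩
  have h2 : (2 : ZMod Q) ≠ 0 := by
    have : ((2:ℕ):ZMod Q) ≠ 0 := by
      rw [Ne, ZMod.natCast_eq_zero_iff]
      intro h; have := Nat.le_of_dvd (by norm_num) h; omega
    exact_mod_cast this
  have hlF : (l : ZMod Q) ≠ 0 := by
    rw [Ne, ZMod.natCast_eq_zero_iff]
    intro h; have := Nat.le_of_dvd (by omega) h; omega
  obtain ⟨x, hx0, hxE, hxr, hx1, hx1r⟩ := hB1 Q hQ (by omega) hd ({-1, ((n:ZMod Q)-1)/2}) ((Finset.card_le_two).trans (by norm_num))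
  simp only [Finset.mem_insert, Finset.mem_singleton, not_or] at hxE
  rcases Nat.lt_or_ge n 4 with h4 | h4
  · obtain rfl : n = 3 := by omega
    have hc3 : x * (1 - x^2) ≠ 0 := by
      have : x * (1 - x^2) = - (x * ((x-1) * (x - (-1)))) := by ring
      rw [this]
      exact neg_ne_zero.2 (mul_ne_zero hx0 (mul_ne_zero hx1 (sub_ne_zero.2 hxE.1)))
    have hc1 : 1 - x ≠ 0 := by
      intro h; apply hx1; linear_combination -h
    obtain ⟨u, u', hu, hu', h, hne⟩ := hB2 Q hQ (by omega) (1-x) x (x*(1-x^2)) hc1 hx0 hc3 {2*x^3} (by simp)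
    obtain ⟨κ, s, k1, k2, k3⟩ := local3 (ι := Fin (3-1)) l hl (by simp) i x u u' hx0 hu hu' (by linear_combination h) (by simpa using hne)
    exact ⟨κ, s, x, k1, k2, hx0, hxr, hx1r, k3⟩
  · have hx2 : 2 * x - (n-1) ≠ 0 := by
      intro h; apply hxE.2
      rw [eq_div_iff h2]; linear_combination h
    obtain ⟨κ, s, k1, k2, k3⟩ := local4 (ι := Fin (n-1)) n l h4 hl (by simp) hlF i x hx0 hx1 hx2
    exact ⟨κ, s, x, k1, k2, hx0, hxr, hx1r, k3⟩
end PartJ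

section PartK
open Polynomial
section Kap
variable {ι : Type*} [Fintype ι] [DecidableEq ι]

theorem famD_map {R R' : Type*} [CommRing R] [CommRing R'] (φ : R →+* R') (n l : ℕ) (α κ : ι → R) (s x : R) :
    φ ((derivative (famF n l α κ s)).eval x) =
     (derivative (famF n l (fun k => φ (α k)) (fun k => φ (κ k)) (φ s))).eval (φ x) := by
  rw [← famF_map, derivative_map, eval_map, eval₂_hom]

theorem exists_res (h : ℤ[X]) (A B : ℤ) (hB : B ≠ 0) (hne : aeval (-(A:ℝ)/B) h ≠ 0) :
    ∃ E : ℤ, E ≠ 0 ∧ ∀ s : ℤ, ∀ π : ℕ, π.Prime → (π:ℤ) ∣ A + B * s → (π:ℤ) ∣ h.eval s → (π:ℤ) ∣ E := by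
  refine ⟨(scaleRoots h B).eval (-A), fun h0 => ?_, fun s π hπ h1 h2 => ?_⟩
  · apply hne
    have h3 := scaleRoots_eval₂_mul (p := h) (algebraMap ℤ ℝ) (-(A:ℝ)/B) B
    have hB' : (B:ℝ) ≠ 0 := by exact_mod_cast hB
    have h4 : (algebraMap ℤ ℝ) B * (-(A:ℝ)/B) = (algebraMap ℤ ℝ) (-A) := by
      simp; field_simp
    rw [h4, eval₂_hom, h0] at h3
    simp only [map_zero] at h3
    have := (mul_eq_zero.1 h3.symm).resolve_left (pow_ne_zero _ (by simpa using hB'))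
    exact this
  · have h3 : (B * s - (-A)) ∣ (scaleRoots h B).eval (B * s) - (scaleRoots h B).eval (-A) := sub_dvd_eval_sub _ _ _
    have h4 : (π:ℤ) ∣ (scaleRoots h B).eval (B * s) := by
      have h5 := scaleRoots_eval₂_mul (p := h) (RingHom.id ℤ) s B
      rw [RingHom.id_apply] at h5
      change eval (B*s) (scaleRoots h B) = B^_ * eval s h at h5
      rw [h5]
      exact h2.mul_left _
    have h6 : (π:ℤ) ∣ B * s - (-A) := by convert h1 using 1; ring
    exact (dvd_sub_right h4).1 (h6.trans h3)

theorem famPsi_abs (l : ℕ) (y z : ℤ) : |famPsi l y z| ≤ l * (|y|+|z|)^(l-1) := by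
  unfold famPsi
  refine (Finset.abs_sum_le_sum_abs _ _).trans ?_
  rw [show (l:ℤ) * (|y|+|z|)^(l-1) = ∑ k ∈ Finset.range l, (|y|+|z|)^(l-1) by simp]
  refine Finset.sum_le_sum fun k hk => ?_
  have hk' := Finset.mem_range.1 hk
  rw [abs_mul, abs_pow, abs_pow]
  have h1 : |y+z| ≤ |y|+|z| := abs_add_le y z
  have h2 : |y| ≤ |y|+|z| := le_add_of_nonneg_right (abs_nonneg z)
  calc |y+z|^k * |y|^(l-1-k) ≤ (|y|+|z|)^k * (|y|+|z|)^(l-1-k) := by gcongr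
    _ = _ := by rw [← pow_add]; congr 1; omega

def famB (n l : ℕ) (α κ : ι → ℤ) (j : ι) : ℤ := |κ j| * (l * (|α j ^ n| + |κ j * famM (fun k => α k ^ l) j|)^(l-1))

theorem famS_abs (n l : ℕ) (hl : 1 ≤ l) (α κ : ι → ℤ) (s : ℤ) (hs : 1 ≤ s) (j : ι) :
    |famS n l α κ s j| ≤ famB n l α κ j * s ^ l := by
  unfold famS famB
  rw [abs_mul, abs_mul, abs_of_pos (show 0 < s by omega)]
  have h1 := famPsi_abs l (α j ^ n) (κ j * s * famM (fun k => α k ^ l) j)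
  have h2 : |α j ^ n| + |κ j * s * famM (fun k => α k ^ l) j| ≤ s * (|α j ^ n| + |κ j * famM (fun k => α k ^ l) j|) := by
    rw [mul_right_comm, abs_mul _ s, abs_of_pos (show 0 < s by omega)]
    nlinarith [abs_nonneg (α j ^ n)]
  have h3 : (|α j ^ n| + |κ j * s * famM (fun k => α k ^ l) j|)^(l-1) ≤ (s * (|α j ^ n| + |κ j * famM (fun k => α k ^ l) j|))^(l-1) := by
    gcongr
  calc _ ≤ |κ j| * s * (l * (s * (|α j ^ n| + |κ j * famM (fun k => α k ^ l) j|))^(l-1)) := by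
        gcongr
        exact h1.trans (by gcongr)
    _ = _ := by
        obtain ⟨d, rfl⟩ : ∃ d, l = d + 1 := ⟨l-1, by omega⟩
        simp only [Nat.add_sub_cancel, mul_pow, pow_succ s d]
        ring

theorem famS_ge (n l : ℕ) (hl : 1 ≤ l) (α κ : ι → ℤ) (s : ℤ) (hs : 1 ≤ s) (j : ι) (hα : 0 < α j) (hκ : 0 < κ j)
    (hM : 0 < famM (fun k => α k ^ l) j) : κ j * s ^ l ≤ famS n l α κ s j := by
  unfold famS
  set M := famM (fun k => α k ^ l) j
  have h0 : 0 < κ j * s := by positivity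
  have h1 : s^(l-1) ≤ famPsi l (α j ^ n) (κ j * s * M) := by
    unfold famPsi
    have hy : 0 < α j ^ n := by positivity
    have hz : s ≤ κ j * s * M := by
      have : 1 ≤ κ j * M := by have := mul_pos hκ hM; omega
      nlinarith
    calc s^(l-1) ≤ (α j ^ n + κ j * s * M)^(l-1) * (α j ^ n) ^ (l-1-(l-1)) := by
          rw [Nat.sub_self, pow_zero, mul_one]; gcongr; omega
      _ ≤ _ := Finset.single_le_sum (f := fun k => (α j ^ n + κ j * s * M)^k * (α j ^ n) ^ (l-1-k)) (fun k _ => by positivity) (by simp; omega)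
  calc κ j * s^l = κ j * s * s^(l-1) := by
        rw [mul_assoc, ← pow_succ']; congr 2; omega
    _ ≤ _ := by gcongr

theorem famS_congr {R : Type*} [CommRing R] (n l : ℕ) (α κ κ' : ι → R) (s : R) (j : ι) (h : κ j = κ' j) :
    famS n l α κ s j = famS n l α κ' s j := by
  unfold famS; rw [h]


open Filter Topology in
theorem pow_ne_eventually (b c K : ℝ) (hc : c ≠ 0) (l : ℕ) (hl : 1 ≤ l) : ∀ᶠ t : ℕ in atTop, (b + c * t)^l ≠ K := by
  have h1 : Tendsto (fun t : ℕ => |c| * (t:ℝ) - |b|) atTop atTop := by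
    refine tendsto_atTop_add_const_right _ _ ?_
    exact tendsto_natCast_atTop_atTop.const_mul_atTop (abs_pos.2 hc)
  filter_upwards [h1.eventually_gt_atTop (|K|+1)] with t ht heq
  have h2 : |c| * (t:ℝ) - |b| ≤ |b + c * t| := by
    have := abs_sub_abs_le_abs_sub (c * t) (-b)
    rw [abs_neg, abs_mul, Nat.abs_cast] at this
    rw [show b + c * t = c * t - (-b) by ring]; exact this
  have h3 : |b + c * t| ≤ |b + c * t|^l := le_self_pow₀ (by linarith [abs_nonneg K]) (by omega)
  rw [← abs_pow, heq] at h3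
  linarith

theorem famM_ne {R : Type*} [CommRing R] [IsDomain R] (a : ι → R) (ha : Function.Injective a) (j : ι) : famM a j ≠ 0 := by
  rw [famM, Finset.prod_ne_zero_iff]
  intro k hk
  exact sub_ne_zero.2 fun h => (Finset.ne_of_mem_erase hk) (ha h).symm

theorem famL_ne {R : Type*} [CommRing R] [IsDomain R] (a : ι → R) (ha : Function.Injective a) (j k : ι) (h : k ≠ j) :
    (derivative (famL a j)).eval (a k) ≠ 0 := by
  rw [famL_deriv_ne a j k h, Finset.prod_ne_zero_iff]
  intro i hi
  exact sub_ne_zero.2 fun h => (Finset.ne_of_mem_erase hi) (ha h).symm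

/- real evaluation: nonvanishing of the derivative at the critical parameter -/
open Filter Topology in
theorem deriv_ne_eventually (n l : ℕ) (hl : 1 ≤ l) (hn : 1 ≤ n) (α κ0 : ι → ℝ) (hα : ∀ j, 0 < α j) (hκ : ∀ j, 0 < κ0 j)
    (hinj : Function.Injective (fun j => α j ^ l))
    (hH : ∀ j, n * famM (fun k => α k ^ l) j - α j ^ l * (derivative (famL (fun k => α k ^ l) j)).eval (α j ^ l) ≠ 0)
    (m : ι) (N : ℝ) (hN : 0 < N) (j : ι) : ∀ᶠ t : ℕ in atTop,
      (derivative (famF n l α (Function.update κ0 m (κ0 m + N * t))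
        (-(α j ^ n) / ((Function.update κ0 m (κ0 m + N * t)) j * famM (fun k => α k ^ l) j)))).eval (α j ^ l) ≠ 0 := by
  set a : ι → ℝ := fun k => α k ^ l with ha
  have hM : ∀ j, famM a j ≠ 0 := famM_ne a hinj
  have hpos : ∀ t : ℕ, 0 < κ0 m + N * t := fun t => by have := hκ m; positivity
  set κ : ℕ → ι → ℝ := fun t => Function.update κ0 m (κ0 m + N * t) with hκd
  have hκt : ∀ t j, κ t j ≠ 0 := by
    intro t j
    simp only [hκd, Function.update_apply]
    split_ifs
    · exact (hpos t).ne'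
    · exact (hκ j).ne'
  set s : ℕ → ℝ := fun t => -(α j ^ n) / (κ t j * famM a j) with hs
  change ∀ᶠ t : ℕ in atTop, (derivative (famF n l α (κ t) (s t))).eval (a j) ≠ 0
  have hU : ∀ t, famU n l α (κ t) (s t) j = 0 := by
    intro t
    simp only [famU, hs]
    change α j ^ n + κ t j * (-α j ^ n / (κ t j * famM a j)) * famM a j = 0
    have := hκt t j; have := hM j
    field_simp; ring
  have hSj : ∀ t, famS n l α (κ t) (s t) j = - (a j)^n / famM a j := by
    intro t
    have := famS_mul n l α (κ t) (s t) j
    rw [hU, zero_pow (by omega)] at this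
    rw [eq_div_iff (hM j)]
    rw [this]; simp [ha]
  by_cases hjm : j = m
  · subst hjm
    have hs0 : Tendsto s atTop (𝓝 0) := by
      have h1 : Tendsto (fun t : ℕ => (κ0 j + N * t) * famM a j) atTop (if 0 < famM a j then atTop else atBot) := by
        have h2 : Tendsto (fun t : ℕ => (κ0 j + N * (t:ℝ))) atTop atTop :=
          tendsto_atTop_add_const_left _ _ (tendsto_natCast_atTop_atTop.const_mul_atTop hN)
        split_ifs with h
        · exact h2.atTop_mul_const h
        · exact h2.atTop_mul_const_of_neg (lt_of_le_of_ne (not_lt.1 h) (hM j))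
      have : s = fun t : ℕ => -(α j ^ n) / ((κ0 j + N * t) * famM a j) := by
        ext t; simp [hs, hκd]
      rw [this]
      split_ifs at h1
      · exact h1.const_div_atTop _
      · exact h1.const_div_atBot _
    have hlim : Tendsto (fun t => (derivative (famF n l α (κ t) (s t))).eval (a j)) atTop
       (𝓝 (n * (a j)^(n-1) + (- (a j)^n / famM a j) * (derivative (famL a j)).eval (a j) + ∑ k ∈ Finset.univ.erase j, 0 * (derivative (famL a k)).eval (a j))) := by
      have : (fun t => (derivative (famF n l α (κ t) (s t))).eval (a j)) = fun t =>
         n * (a j)^(n-1) + (- (a j)^n / famM a j) * (derivative (famL a j)).eval (a j) + ∑ k ∈ Finset.univ.erase j, famS n l α κ0 (s t) k * (derivative (famL a k)).eval (a j) := by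
        ext t
        rw [famF_deriv, ← Finset.add_sum_erase _ _ (Finset.mem_univ j), hSj, ← add_assoc]
        congr 1
        refine Finset.sum_congr rfl fun k hk => ?_
        rw [famS_congr n l α (κ t) κ0]
        simp [hκd, Function.update_apply, Finset.ne_of_mem_erase hk]
      rw [this]
      refine Tendsto.add tendsto_const_nhds (tendsto_finsetSum _ fun k _ => Tendsto.mul ?_ tendsto_const_nhds)
      have hcont : Continuous fun x : ℝ => famS n l α κ0 x k := by
        unfold famS famPsi; fun_prop
      have := (hcont.tendsto 0).comp hs0
      have h0 : famS n l α κ0 0 k = 0 := by simp [famS]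
      rw [h0] at this
      exact this
    refine hlim.eventually_ne ?_
    simp only [zero_mul, Finset.sum_const_zero, add_zero]
    have h1 := hH j
    have h2 : (a j) ≠ 0 := (pow_pos (hα j) l).ne'
    intro h
    apply h1
    have h3 : (a j)^(n-1) * (n * famM a j - a j * (derivative (famL a j)).eval (a j)) = 0 := by
      have h4 : a j ^ n = a j ^ (n-1) * a j := by rw [← pow_succ]; congr 1; omega
      rw [h4] at h
      have := hM j
      field_simp at h
      linear_combination  h
    exact (mul_eq_zero.1 h3).resolve_left (pow_ne_zero _ h2)
  · have hκj : ∀ t, κ t j = κ0 j := by intro t; simp [hκd, Function.update_apply, hjm]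
    set s0 : ℝ := -(α j ^ n) / (κ0 j * famM a j) with hs0
    have hst : ∀ t, s t = s0 := by intro t; simp only [hs, hκj, hs0]
    have hs00 : s0 ≠ 0 := div_ne_zero (neg_ne_zero.2 (pow_pos (hα j) n).ne') (mul_ne_zero (hκ j).ne' (hM j))
    set c0 : ℝ := n * (a j)^(n-1) + ∑ k ∈ Finset.univ.erase m, famS n l α κ0 s0 k * (derivative (famL a k)).eval (a j)
    have hD : ∀ t, (derivative (famF n l α (κ t) (s t))).eval (a j) = c0 + famS n l α (κ t) s0 m * (derivative (famL a m)).eval (a j) := by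
      intro t
      rw [famF_deriv, ← Finset.sum_erase_add _ _ (Finset.mem_univ m), hst, ← add_assoc]
      congr 2
      refine Finset.sum_congr rfl fun k hk => ?_
      rw [famS_congr n l α (κ t) κ0]
      simp [hκd, Function.update_apply, Finset.ne_of_mem_erase hk]
    have hLm := famL_ne a hinj m j hjm
    set L := (derivative (famL a m)).eval (a j)
    have hc : N * s0 * famM a m ≠ 0 := mul_ne_zero (mul_ne_zero hN.ne' hs00) (hM m)
    filter_upwards [pow_ne_eventually (α m ^ n + κ0 m * s0 * famM a m) (N * s0 * famM a m) (-c0 / L * famM a m + (a m)^n) hc l hl] with t ht h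
    apply ht
    rw [hD] at h
    have h1 := famS_mul n l α (κ t) s0 m
    change famS n l α (κ t) s0 m * famM a m = _ - (a m)^n at h1
    have h2 : famS n l α (κ t) s0 m = -c0 / L := by
      rw [eq_div_iff hLm]; linear_combination h
    rw [h2] at h1
    have h3 : famU n l α (κ t) s0 m = (α m ^ n + κ0 m * s0 * famM a m) + (N * s0 * famM a m) * t := by
      simp only [famU, hκd, Function.update_self]
      change α m ^ n + (κ0 m + N * ↑t) * s0 * famM a m = _
      ring
    rw [← h3]; linear_combination -h1

open Filter Topology in
theorem kappa_exists (n l : ℕ) (hn : 1 ≤ n) (hl : 1 ≤ l) [Nonempty ι] (α : ι → ℤ) (hα : ∀ j, 0 < α j)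
    (hinj : Function.Injective (fun j => α j ^ l))
    (hH : ∀ j, n * famM (fun k => α k ^ l) j - α j ^ l * (derivative (famL (fun k => α k ^ l) j)).eval (α j ^ l) ≠ 0)
    (r : ι → ℤ) (N : ℕ) (hN : 0 < N) : ∃ κ : ι → ℤ, (∀ j, 0 < κ j) ∧ (∀ j, (N:ℤ) ∣ κ j - r j) ∧
      (∀ s : ℤ, 1 ≤ s → 0 < ∑ j, famS n l α κ s j) ∧
      ∃ E : ℤ, E ≠ 0 ∧ ∀ s : ℤ, ∀ j, ∀ π : ℕ, π.Prime → (π:ℤ) ∣ famU n l α κ s j →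
        (π:ℤ) ∣ (derivative (famF n l α κ s)).eval (α j ^ l) → (π:ℤ) ∣ E := by
  obtain ⟨m, hm⟩ := Finite.exists_max (fun j => α j ^ l)
  have hMm : 0 < famM (fun k => α k ^ l) m := by
    refine Finset.prod_pos fun k hk => ?_
    have h1 := hm k
    have h2 : α k ^ l ≠ α m ^ l := fun h => (Finset.ne_of_mem_erase hk) (hinj h)
    exact sub_pos.2 (lt_of_le_of_ne h1 h2)
  set κ0 : ι → ℤ := fun j => r j + N * (|r j| + 1) with hκ0
  have hκ0p : ∀ j, 0 < κ0 j := by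
    intro j
    simp only [hκ0]
    have h1 : (1:ℤ) ≤ N := by exact_mod_cast hN
    nlinarith [abs_nonneg (r j), neg_abs_le (r j)]
  set κ : ℕ → ι → ℤ := fun t => Function.update κ0 m (κ0 m + N * t) with hκ
  have hκp : ∀ t j, 0 < κ t j := by
    intro t j
    simp only [hκ, Function.update_apply]
    split_ifs
    · have := hκ0p m; positivity
    · exact hκ0p j
  have hinjR : Function.Injective (fun j => ((α j : ℤ) : ℝ) ^ l) := by
    intro x y h
    apply hinj
    simp only at h ⊢
    exact_mod_cast h
  have ev1 : ∀ᶠ t : ℕ in atTop, ∀ s : ℤ, 1 ≤ s → 0 < ∑ j, famS n l α (κ t) s j := by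
    filter_upwards [tendsto_natCast_atTop_atTop.eventually_ge_atTop (∑ j ∈ Finset.univ.erase m, famB n l α κ0 j)] with t ht s hs
    rw [← Finset.sum_erase_add _ _ (Finset.mem_univ m)]
    have h1 := famS_ge n l hl α (κ t) s hs m (hα m) (hκp t m) hMm
    have h2 : -((∑ j ∈ Finset.univ.erase m, famB n l α κ0 j) * s^l) ≤ ∑ j ∈ Finset.univ.erase m, famS n l α (κ t) s j := by
      rw [Finset.sum_mul, ← Finset.sum_neg_distrib]
      refine Finset.sum_le_sum fun k hk => ?_
      rw [famS_congr n l α (κ t) κ0 s k (by simp [hκ, Function.update_apply, Finset.ne_of_mem_erase hk])]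
      exact (abs_le.1 (famS_abs n l hl α κ0 s hs k)).1
    have h3 : κ t m = κ0 m + N * t := by simp [hκ]
    have h4 : (t:ℤ) < κ t m := by
      rw [h3]
      have h1 : (1:ℤ) ≤ N := by exact_mod_cast hN
      nlinarith [hκ0p m, (Nat.cast_nonneg t : (0:ℤ) ≤ t)]
    have h5 : 0 < s^l := by positivity
    nlinarith
  have ev2 : ∀ j, ∀ᶠ t : ℕ in atTop,
      (derivative (famF n l (fun k => (α k : ℝ)) (fun k => (κ t k : ℝ))
        (-((α j ^ n : ℤ):ℝ) / (κ t j * famM (fun k => α k ^ l) j : ℤ)))).eval ((α j:ℝ) ^ l) ≠ 0 := by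
    intro j
    have := deriv_ne_eventually n l hl hn (fun k => (α k : ℝ)) (fun k => (κ0 k : ℝ)) (fun k => by exact_mod_cast hα k)
      (fun k => by exact_mod_cast hκ0p k) hinjR ?_ m N (by exact_mod_cast hN) j
    · refine this.mono fun t ht => ?_
      have e1 : (fun k => (κ t k : ℝ)) = Function.update (fun k => (κ0 k : ℝ)) m ((κ0 m : ℝ) + N * t) := by
        ext k
        simp only [hκ, Function.update_apply]
        split_ifs <;> simp
      have e2 : ((famM (fun k => α k ^ l) j : ℤ) : ℝ) = famM (fun k => ((α k : ℝ)) ^ l) j := by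
        have := famM_map (Int.castRingHom ℝ) (fun k => α k ^ l) j
        simpa using this
      rw [Int.cast_mul, e2, Int.cast_pow, show (κ t j : ℝ) = (fun k => (κ t k : ℝ)) j from rfl, e1]
      exact ht
    · intro j
      have h1 : ((n * famM (fun k => α k ^ l) j - α j ^ l * (derivative (famL (fun k => α k ^ l) j)).eval (α j ^ l) : ℤ) : ℝ) ≠ 0 := by
        exact_mod_cast hH j
      have e2 := famM_map (Int.castRingHom ℝ) (fun k => α k ^ l) j
      have e3 : ((eval (α j ^ l) (derivative (famL (fun k => α k ^ l) j)) : ℤ) : ℝ) = eval ((α j:ℝ)^l) (derivative (famL (fun k => ((α k:ℝ))^l) j)) := by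
        have := famL_map (Int.castRingHom ℝ) (fun k => α k ^ l) j
        simp only [eq_intCast, Int.cast_pow] at this
        rw [← this, derivative_map, eval_map, ← Int.cast_pow, ← eq_intCast (Int.castRingHom ℝ), ← eq_intCast (Int.castRingHom ℝ), eval₂_hom]
      simp only [eq_intCast, Int.cast_pow] at e2
      push_cast at h1
      rw [e2, e3] at h1
      exact h1
  obtain ⟨t, ht1, ht2⟩ := (ev1.and (eventually_all.2 ev2)).exists
  refine ⟨κ t, hκp t, fun j => ?_, ht1, ?_⟩
  · simp only [hκ, Function.update_apply]
    split_ifs with h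
    · subst h; exact ⟨|r j| + 1 + t, by simp only [hκ0]; ring⟩
    · exact ⟨|r j| + 1, by simp only [hκ0]; ring⟩
  · have : ∀ j, ∃ E : ℤ, E ≠ 0 ∧ ∀ s : ℤ, ∀ π : ℕ, π.Prime → (π:ℤ) ∣ famU n l α (κ t) s j →
        (π:ℤ) ∣ (derivative (famF n l α (κ t) s)).eval (α j ^ l) → (π:ℤ) ∣ E := by
      intro j
      set h := (derivative (famF n l (fun k => C (α k)) (fun k => C (κ t k)) (X:ℤ[X]))).eval (C (α j ^ l)) with hh
      have hne : aeval (-((α j ^ n : ℤ):ℝ) / (κ t j * famM (fun k => α k ^ l) j : ℤ)) h ≠ 0 := by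
        set y : ℝ := -((α j ^ n : ℤ):ℝ) / (κ t j * famM (fun k => α k ^ l) j : ℤ) with hy
        have := famD_map (aeval y : ℤ[X] →ₐ[ℤ] ℝ).toRingHom n l (fun k => C (α k)) (fun k => C (κ t k)) (X:ℤ[X]) (C (α j ^ l))
        simp only [AlgHom.toRingHom_eq_coe, RingHom.coe_coe, aeval_C, aeval_X] at this
        rw [hh, this]
        have := ht2 j
        rw [← hy] at this
        simpa using this
      obtain ⟨E, hE, hE'⟩ := exists_res h (α j ^ n) (κ t j * famM (fun k => α k ^ l) j) (mul_ne_zero (hκp t j).ne' (famM_ne _ hinj j)) hne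
      refine ⟨E, hE, fun s π hπ h1 h2 => hE' s π hπ ?_ ?_⟩
      · convert h1 using 1; simp only [famU]; ring
      · have := famD_map (evalRingHom s) n l (fun k => C (α k)) (fun k => C (κ t k)) (X:ℤ[X]) (C (α j ^ l))
        simp only [coe_evalRingHom, eval_C, eval_X] at this
        rw [hh, this]; exact h2
    choose E hE hE' using this
    refine ⟨∏ j, E j, Finset.prod_ne_zero_iff.2 fun j _ => hE j, fun s j π hπ h1 h2 => ?_⟩
    exact (hE' j s π hπ h1 h2).trans (Finset.dvd_prod_of_mem E (Finset.mem_univ j))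

end Kap
end PartK

section PartL
open Polynomial

theorem primes_inj (T : Type) [Finite T] (B D : ℕ) (hD : D ≠ 0) : ∃ Q : T → ℕ, Function.Injective Q ∧ (∀ τ, (Q τ).Prime) ∧
    (∀ τ, B < Q τ) ∧ (∀ τ, D ∣ Q τ - 1) := by
  set S : Set ℕ := {Q | Q.Prime ∧ B < Q ∧ D ∣ Q - 1} with hS
  have hinf : S.Infinite := by
    rw [Set.infinite_iff_exists_gt]
    intro a
    obtain ⟨p, hp, h1, h2⟩ := Nat.exists_prime_gt_modEq_one (k := D) (a + B) hD
    refine ⟨p, ⟨hp, by omega, ?_⟩, by omega⟩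
    exact (Nat.modEq_iff_dvd' hp.one_lt.le).1 h2.symm
  have := hinf.to_subtype
  obtain ⟨k, ⟨e⟩⟩ := Finite.exists_equiv_fin T
  refine ⟨fun τ => (Infinite.natEmbedding S (e τ).val).1, ?_, fun τ => (Infinite.natEmbedding S (e τ).val).2.1,
    fun τ => (Infinite.natEmbedding S (e τ).val).2.2.1, fun τ => (Infinite.natEmbedding S (e τ).val).2.2.2⟩
  intro x y h
  exact e.injective (Fin.ext ((Infinite.natEmbedding S).injective (Subtype.ext h)))

theorem crt_exists {T : Type} [Fintype T] (Q : T → ℕ) (hinj : Function.Injective Q) (hp : ∀ τ, (Q τ).Prime)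
    (c : ∀ τ, ZMod (Q τ)) : ∃ k : ℕ, ∀ τ, (k : ZMod (Q τ)) = c τ := by
  have hne : ∀ τ, NeZero (Q τ) := fun τ => ⟨(hp τ).ne_zero⟩
  obtain ⟨k, hk⟩ := Nat.chineseRemainderOfFinset (fun τ => (c τ).val) Q Finset.univ (fun τ _ => (hp τ).ne_zero)
    (fun x _ y _ hxy => (Nat.coprime_primes (hp x) (hp y)).2 fun h => hxy (hinj h))
  refine ⟨k, fun τ => ?_⟩
  have := (ZMod.natCast_eq_natCast_iff _ _ _).2 (hk τ (Finset.mem_univ τ))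
  rw [this, ZMod.natCast_val, ZMod.cast_id]

theorem alpha_exists {ι P : Type} [Fintype ι] [Fintype P] [DecidableEq ι] (Q : ι × P → ℕ) (hinj : Function.Injective Q) (hp : ∀ τ, (Q τ).Prime) :
    ∃ α : ι → ℤ, (∀ j, 0 < α j) ∧ (∀ τ j, ((α j : ℤ) : ZMod (Q τ)) = if j = τ.1 then 0 else 1) ∧
      (∀ j, ∀ π : ℕ, π.Prime → (π:ℤ) ∣ α j → ∃ τ, π = Q τ) := by
  set N := ∏ τ, (Q τ - 1) with hN
  have hN0 : N ≠ 0 := Finset.prod_ne_zero_iff.2 fun τ _ => by have := (hp τ).two_le; omega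
  refine ⟨fun j => (((∏ p, Q (j,p))^N : ℕ) : ℤ), fun j => ?_, fun τ j => ?_, fun j π hπ h => ?_⟩
  · have : 0 < (∏ p, Q (j,p)) := Finset.prod_pos fun p _ => (hp _).pos
    positivity
  · have : Fact (Q τ).Prime := ⟨hp τ⟩
    push_cast
    split_ifs with h
    · rw [Finset.prod_eq_zero (i := τ.2) (Finset.mem_univ _), zero_pow hN0]
      rw [h]; simp
    · obtain ⟨c, hc⟩ : (Q τ - 1) ∣ N := Finset.dvd_prod_of_mem _ (Finset.mem_univ τ)
      rw [hc, pow_mul, ZMod.pow_card_sub_one_eq_one, one_pow]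
      rw [Finset.prod_ne_zero_iff]
      intro p _ h0
      rw [ZMod.natCast_eq_zero_iff, Nat.prime_dvd_prime_iff_eq (hp _) (hp _)] at h0
      have := hinj h0
      exact h (by rw [this])
  · have h' : π ∣ (∏ p, Q (j,p))^N := Int.natCast_dvd_natCast.1 h
    obtain ⟨p, _, hp'⟩ := (hπ.prime.dvd_finsetProd_iff _).1 (hπ.dvd_of_dvd_pow h')
    exact ⟨(j,p), (Nat.prime_dvd_prime_iff_eq hπ (hp _)).1 hp'⟩

def famG {ι R : Type*} [Fintype ι] [DecidableEq ι] [CommRing R] (n l : ℕ) (α κ : ι → R) (s : R) : R :=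
  ∑ j, κ j * famPsi l (α j ^ n) (κ j * s * famM (fun k => α k ^ l) j) * ∏ k ∈ Finset.univ.erase j, (- α k ^ l)

theorem famG_eq {ι R : Type*} [Fintype ι] [DecidableEq ι] [CommRing R] [Nontrivial R] (n l : ℕ) (hn : 1 ≤ n) (α κ : ι → R) (s : R) :
    (famF n l α κ s).coeff 0 = s * famG n l α κ s := by
  rw [famF_coeff _ _ _ _ _ _ (by omega), famG, Finset.mul_sum]
  refine Finset.sum_congr rfl fun j _ => ?_
  rw [coeff_zero_eq_eval_zero]
  simp [famS, famL, eval_prod]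
  ring

theorem famG_map {ι R R' : Type*} [Fintype ι] [DecidableEq ι] [CommRing R] [CommRing R'] (φ : R →+* R') (n l : ℕ) (α κ : ι → R) (s : R) :
    φ (famG n l α κ s) = famG n l (fun k => φ (α k)) (fun k => φ (κ k)) (φ s) := by
  simp [famG, famPsi_map, famM_map]

theorem famG_zero {ι : Type*} [Fintype ι] [DecidableEq ι] [Nonempty ι] (n l : ℕ) (hl : 1 ≤ l) (α κ : ι → ℤ) (hα : ∀ j, 0 < α j) (hκ : ∀ j, 0 < κ j) :
    famG n l α κ 0 ≠ 0 := by
  have : famG n l α κ 0 = (-1)^(Fintype.card ι - 1) * ∑ j, κ j * (l * (α j ^ n)^(l-1)) * ∏ k ∈ Finset.univ.erase j, α k ^ l := by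
    rw [famG, Finset.mul_sum]
    refine Finset.sum_congr rfl fun j _ => ?_
    rw [mul_zero, zero_mul, famPsi_zero_right, Finset.prod_neg, Finset.card_erase_of_mem (Finset.mem_univ _), Finset.card_univ]
    ring
  rw [this]
  refine mul_ne_zero (pow_ne_zero _ (by norm_num)) (ne_of_gt ?_)
  refine Finset.sum_pos (fun j _ => ?_) Finset.univ_nonempty
  have h1 := hκ j
  have h2 := hα j
  have h3 : 0 < ∏ k ∈ Finset.univ.erase j, α k ^ l := Finset.prod_pos fun k _ => pow_pos (hα k) _
  have h4 : (0:ℤ) < l := by exact_mod_cast hl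
  positivity
end PartL

section PartM
open Polynomial

theorem not_coprime_prime (x y : ℤ) (h : ¬ IsCoprime x y) : ∃ π : ℕ, π.Prime ∧ (π:ℤ) ∣ x ∧ (π:ℤ) ∣ y := by
  rw [Int.isCoprime_iff_nat_coprime, Nat.Prime.not_coprime_iff_dvd] at h
  obtain ⟨p, hp, h1, h2⟩ := h
  exact ⟨p, hp, Int.natCast_dvd.2 h1, Int.natCast_dvd.2 h2⟩

theorem family (n l : ℕ) (hn : 3 ≤ n) (hl : 1 ≤ l) : ∃ (C q0 : ℕ), ∀ q : ℕ, q.Prime → q0 < q →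
    ∃ f : ℤ[X], f.Monic ∧ f.natDegree = n ∧ (∀ k < n, (q:ℤ) ∣ f.coeff k) ∧ ¬ (q:ℤ)^2 ∣ f.coeff 0 ∧
     (∀ k < n, |f.coeff k| ≤ C * (q:ℤ)^l) ∧ f.coeff (n-1) = 0 ∧ 0 < f.coeff (n-2) ∧
     ∃ a u : Fin (n-1) → ℤ, (∀ j, f.eval (a j) = u j ^ l) ∧
      (∀ j, IsCoprime (f.derivative.eval (a j)) (u j)) ∧
      (∀ p, p.Prime → p ∣ l → ∀ i, ∃ (Q:ℕ) (_:Fact Q.Prime), p*(2*n).factorial ∣ Q-1 ∧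
        ∃ x : ZMod Q, aeval x f = 0 ∧ aeval x (derivative f) ≠ 0 ∧ (∀ j, j≠i → (x-(a j:ZMod Q))^((Q-1)/p)=1) ∧
          x-(a i:ZMod Q) ≠ 0 ∧ (x-(a i:ZMod Q))^((Q-1)/p) ≠ 1) := by
  classical
  have hc : Fintype.card (Fin (n-1)) = n - 1 := by simp
  have hne : Nonempty (Fin (n-1)) := ⟨⟨0, by omega⟩⟩
  have hl0 : l ≠ 0 := by omega
  -- primes
  have hB : ∀ p : ↥((2*l).primeFactors), _ := fun p => local_data n l hn hl p.1 (Nat.prime_of_mem_primeFactors p.2)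
  choose B hB using hB
  set D := 2 * l * (2*n).factorial with hD
  have hD0 : D ≠ 0 := by rw [hD]; have := Nat.factorial_ne_zero (2*n); positivity
  obtain ⟨Q, Qinj, Qp, QB, QD⟩ := primes_inj (Fin (n-1) × ↥((2*l).primeFactors)) (∑ p, B p + n) D hD0
  have hfact : ∀ τ, Fact (Q τ).Prime := fun τ => ⟨Qp τ⟩
  have p2 : 2 ∈ (2*l).primeFactors := by rw [Nat.mem_primeFactors]; exact ⟨Nat.prime_two, dvd_mul_right _ _, by omega⟩
  have QB1 : ∀ τ, B τ.2 < Q τ := fun τ => by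
    have h1 := Finset.single_le_sum (f := B) (fun _ _ => Nat.zero_le _) (Finset.mem_univ τ.2)
    have := QB τ
    omega
  have QBn : ∀ τ, n < Q τ := fun τ => by have := QB τ; omega
  have Qpd : ∀ τ, τ.2.1 ∣ Q τ - 1 := fun τ =>
    ((Nat.dvd_of_mem_primeFactors τ.2.2).trans (dvd_mul_right _ _)).trans (QD τ)
  have hloc := fun τ => hB τ.2 (Q τ) (hfact τ) (QB1 τ) (Qpd τ) τ.1
  choose κl sl xl lx1 lx2 lx3 lx4 lx5 lu using hloc
  obtain ⟨α, αpos, αmod, αprime⟩ := alpha_exists Q Qinj Qp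
  have amod : ∀ τ j, (((α j) ^ l : ℤ) : ZMod (Q τ)) = if j = τ.1 then 0 else 1 := by
    intro τ j
    rw [Int.cast_pow, αmod]; split_ifs <;> simp [hl0]
  have ainj : Function.Injective (fun j => α j ^ l) := by
    intro i j h
    by_contra hij
    have h1 := amod (i, ⟨2, p2⟩) i
    have h2 := amod (i, ⟨2, p2⟩) j
    simp only at h
    rw [h, h2] at h1
    simp [Ne.symm hij] at h1
  have hH : ∀ j, n * famM (fun k => α k ^ l) j - α j ^ l * (derivative (famL (fun k => α k ^ l) j)).eval (α j ^ l) ≠ 0 := by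
    intro j h
    have h1 := congrArg (Int.castRingHom (ZMod (Q (j, ⟨2, p2⟩)))) h
    rw [map_sub, map_mul, map_mul, famM_map, eq_intCast (Int.castRingHom _) (α j ^ l), amod] at h1
    simp only [if_true, zero_mul, sub_zero, map_natCast, map_zero] at h1
    rcases mul_eq_zero.1 h1 with h1 | h1
    · rw [ZMod.natCast_eq_zero_iff] at h1
      have := Nat.le_of_dvd (by omega) h1
      have := QBn (j, ⟨2, p2⟩)
      omega
    · rw [famM, Finset.prod_eq_zero_iff] at h1
      obtain ⟨k, hk, h2⟩ := h1
      rw [eq_intCast, eq_intCast, amod, amod] at h2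
      simp [Finset.ne_of_mem_erase hk] at h2
  have hr : ∀ j, ∃ k : ℕ, ∀ τ, (k : ZMod (Q τ)) = κl τ j := fun j => crt_exists Q Qinj Qp (fun τ => κl τ j)
  choose r hr using hr
  set N := ∏ τ, Q τ with hN
  have hN0 : 0 < N := Finset.prod_pos fun τ _ => (Qp τ).pos
  have QN : ∀ τ, Q τ ∣ N := fun τ => Finset.dvd_prod_of_mem _ (Finset.mem_univ τ)
  obtain ⟨κ, κpos, κmod, κsum, E, hE0, hE⟩ := kappa_exists n l (by omega) hl α αpos ainj hH (fun j => (r j : ℤ)) N hN0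
  have κmod' : ∀ τ j, ((κ j : ℤ) : ZMod (Q τ)) = κl τ j := by
    intro τ j
    rw [← hr j τ]
    have h1 : ((Q τ : ℕ) : ℤ) ∣ κ j - r j := (Int.natCast_dvd_natCast.2 (QN τ)).trans (κmod j)
    have := (ZMod.intCast_zmod_eq_zero_iff_dvd _ _).2 h1
    push_cast at this
    linear_combination this
  set E' := ∏ π ∈ E.natAbs.primeFactors.filter (fun π => ∀ τ, π ≠ Q τ), π with hE'
  have hE'0 : 0 < E' := Finset.prod_pos fun π hπ => (Nat.prime_of_mem_primeFactors (Finset.mem_filter.1 hπ).1).pos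
  have hE'Q : ∀ τ, ((E':ℕ) : ZMod (Q τ)) ≠ 0 := by
    intro τ
    rw [hE', Nat.cast_prod, Finset.prod_ne_zero_iff]
    intro π hπ h
    rw [Finset.mem_filter] at hπ
    rw [ZMod.natCast_eq_zero_iff, Nat.prime_dvd_prime_iff_eq (Qp τ) (Nat.prime_of_mem_primeFactors hπ.1)] at h
    exact hπ.2 τ h.symm
  set H : ℤ := ∑ j, famB n l α κ j * ∑ k ∈ Finset.range n, |(famL (fun k => α k ^ l) j).coeff k| with hHdef
  have hBnn : ∀ j, 0 ≤ famB n l α κ j := fun j => by unfold famB; positivity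
  refine ⟨(H * (2 * N * E')^l).toNat, 2 * N + E' + (famG n l α κ 0).natAbs, fun q hq hq0 => ?_⟩
  have hqQ : ∀ τ, ((q:ℕ):ZMod (Q τ)) ≠ 0 := by
    intro τ h
    rw [ZMod.natCast_eq_zero_iff, Nat.prime_dvd_prime_iff_eq (Qp τ) hq] at h
    have := Nat.le_of_dvd hN0 (QN τ)
    omega
  obtain ⟨k, hk⟩ := crt_exists Q Qinj Qp (fun τ => sl τ / ((q:ZMod (Q τ)) * (E' : ZMod (Q τ))))
  set t := k % N + N with ht
  have htN : t < 2 * N := by have := Nat.mod_lt k hN0; omega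
  have ht0 : 0 < t := by omega
  set s : ℕ := q * E' * t with hs
  have hs1 : 1 ≤ s := by have := hq.pos; rw [hs]; exact Nat.succ_le_of_lt (by positivity)
  have hs1' : (1:ℤ) ≤ (s:ℤ) := by exact_mod_cast hs1
  have smod : ∀ τ, ((s:ℕ) : ZMod (Q τ)) = sl τ := by
    intro τ
    have h1 : ((t:ℕ):ZMod (Q τ)) = k := by
      rw [ZMod.natCast_eq_natCast_iff, ht]
      have h2 : k % N + N ≡ k [MOD N] := by
        simp [Nat.ModEq]
      exact h2.of_dvd (QN τ)
    rw [hs, Nat.cast_mul, Nat.cast_mul, h1, hk]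
    have := hqQ τ; have := hE'Q τ
    field_simp
  have smod' : ∀ τ, (((s:ℕ):ℤ) : ZMod (Q τ)) = sl τ := fun τ => by rw [← smod]; simp
  have Fmod : ∀ τ, (famF n l α κ (s:ℤ)).map (Int.castRingHom (ZMod (Q τ))) = famF n l (fun j => if j = τ.1 then 0 else 1) (κl τ) (sl τ) := by
    intro τ
    rw [famF_map]
    simp only [eq_intCast, αmod, κmod', smod']
  have Umod : ∀ τ j, ((famU n l α κ (s:ℤ) j : ℤ) : ZMod (Q τ)) = famU n l (fun j => if j = τ.1 then 0 else 1) (κl τ) (sl τ) j := by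
    intro τ j
    rw [← eq_intCast (Int.castRingHom _), famU_map]
    simp only [eq_intCast, αmod, κmod', smod']
  have Dmod : ∀ τ j, (((derivative (famF n l α κ (s:ℤ))).eval (α j ^ l) : ℤ) : ZMod (Q τ)) =
      (derivative (famF n l (fun j => if j = τ.1 then 0 else 1) (κl τ) (sl τ))).eval ((if j = τ.1 then 0 else 1)^l) := by
    intro τ j
    rw [← eq_intCast (Int.castRingHom _), famD_map]
    simp only [eq_intCast, αmod, κmod', smod', Int.cast_pow]
  have hqs : (q:ℤ) ∣ s := by rw [hs]; push_cast; exact ⟨E' * t, by ring⟩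
  refine ⟨famF n l α κ (s:ℤ), famF_monic n l hn hc _ _ _, famF_natDegree n l hn hc _ _ _, ?_, ?_, ?_, famF_coeff1 n l hn hc _ _ _, ?_,
    fun j => α j ^ l, famU n l α κ s, fun j => famF_eval n l α κ s j, ?_, ?_⟩
  · intro k hk
    rw [famF_coeff _ _ _ _ _ _ hk]
    refine Finset.dvd_sum fun j _ => Dvd.dvd.mul_right ?_ _
    rw [famS]
    exact (hqs.mul_left _).mul_right _
  · intro h
    rw [famG_eq n l (by omega)] at h
    have hs' : (s:ℤ) = q * E' * t := by rw [hs]; push_cast; rfl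
    have hq' : Prime (q:ℤ) := Nat.prime_iff_prime_int.1 hq
    have hqz : (q:ℤ) ≠ 0 := hq'.ne_zero
    have h1 : (q:ℤ) ∣ E' * t * famG n l α κ s := by
      refine (mul_dvd_mul_iff_left hqz).1 ?_
      have h' : (s:ℤ) * famG n l α κ s = q * (E' * t * famG n l α κ s) := by
        generalize famG n l α κ (s:ℤ) = G
        rw [hs']; ring
      rw [← sq, ← h']; exact h
    rcases hq'.dvd_or_dvd h1 with h2 | h2
    · rcases hq'.dvd_or_dvd h2 with h3 | h3
      · have := Nat.le_of_dvd hE'0 (Int.natCast_dvd_natCast.1 h3); omega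
      · have := Nat.le_of_dvd ht0 (Int.natCast_dvd_natCast.1 h3); omega
    · have h3 : (q:ℤ) ∣ famG n l α κ 0 := by
        rw [← ZMod.intCast_zmod_eq_zero_iff_dvd, ← eq_intCast (Int.castRingHom _), famG_map] at h2 ⊢
        have h4 : (Int.castRingHom (ZMod q)) (s:ℤ) = (Int.castRingHom (ZMod q)) 0 := by
          rw [map_zero, eq_intCast, ZMod.intCast_zmod_eq_zero_iff_dvd]; exact hqs
        rw [h4] at h2
        exact h2
      have h5 := Int.natAbs_dvd_natAbs.2 h3
      rw [Int.natAbs_natCast] at h5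
      have := Nat.le_of_dvd (Int.natAbs_pos.2 (famG_zero n l hl α κ αpos κpos)) h5
      omega
  · intro k hk
    rw [famF_coeff _ _ _ _ _ _ hk]
    have hsb : (s:ℤ)^l ≤ (2 * N * E')^l * (q:ℤ)^l := by
      rw [← mul_pow]
      have : s ≤ 2 * N * E' * q := by
        rw [hs]; calc q * E' * t ≤ q * E' * (2 * N) := by gcongr
          _ = _ := by ring
      have : (s:ℤ) ≤ 2 * N * E' * q := by exact_mod_cast this
      gcongr
    have hH0 : 0 ≤ H := Finset.sum_nonneg fun j _ => mul_nonneg (hBnn j) (Finset.sum_nonneg fun _ _ => abs_nonneg _)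
    calc |∑ j, famS n l α κ s j * (famL (fun k => α k ^ l) j).coeff k|
        ≤ ∑ j, |famS n l α κ s j * (famL (fun k => α k ^ l) j).coeff k| := Finset.abs_sum_le_sum_abs _ _
      _ ≤ ∑ j, (famB n l α κ j * (s:ℤ)^l) * ∑ k ∈ Finset.range n, |(famL (fun k => α k ^ l) j).coeff k| := by
          refine Finset.sum_le_sum fun j _ => ?_
          rw [abs_mul]
          refine mul_le_mul (famS_abs n l hl α κ s hs1' j) ?_ (abs_nonneg _) (mul_nonneg (hBnn j) (by positivity))
          exact Finset.single_le_sum (f := fun k => |(famL (fun k => α k ^ l) j).coeff k|) (fun _ _ => abs_nonneg _) (Finset.mem_range.2 hk)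
      _ = H * (s:ℤ)^l := by
          rw [hHdef, Finset.sum_mul]; exact Finset.sum_congr rfl fun j _ => by ring
      _ ≤ H * ((2 * N * E')^l * (q:ℤ)^l) := by gcongr
      _ ≤ _ := by
          rw [← mul_assoc]
          gcongr
          exact Int.self_le_toNat _
  · rw [famF_coeff2 n l hn hc]; exact κsum s hs1'
  · intro j
    by_contra hcop
    obtain ⟨π, hπ, h1, h2⟩ := not_coprime_prime _ _ hcop
    by_cases hτ : ∃ τ, π = Q τ
    · obtain ⟨τ, rfl⟩ := hτ
      rw [← ZMod.intCast_zmod_eq_zero_iff_dvd] at h1 h2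
      rw [Umod] at h2
      rw [Dmod] at h1
      rcases lu τ j with h | h
      · exact h h2
      · exact h h1
    · have h3 := hE s j π hπ h2 h1
      push Not at hτ
      have h4 : π ∣ E' := by
        refine Finset.dvd_prod_of_mem (fun π => π) (Finset.mem_filter.2 ⟨?_, hτ⟩)
        rw [Nat.mem_primeFactors]
        exact ⟨hπ, Int.natCast_dvd.1 h3, Int.natAbs_ne_zero.2 hE0⟩
      have h5 : (π:ℤ) ∣ s := by
        refine Int.natCast_dvd_natCast.2 (h4.trans ?_)
        rw [hs]; exact ⟨q * t, by ring⟩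
      rw [famU] at h2
      have h6 := (dvd_add_left ((h5.mul_left (κ j)).mul_right _)).1 h2
      have h7 := (Nat.prime_iff_prime_int.1 hπ).dvd_of_dvd_pow h6
      obtain ⟨τ, h8⟩ := αprime j π hπ h7
      exact hτ τ h8
  · intro p hp hpl i
    have hpm : p ∈ (2*l).primeFactors := by
      rw [Nat.mem_primeFactors]; exact ⟨hp, hpl.mul_left _, by omega⟩
    set τ : Fin (n-1) × ↥((2*l).primeFactors) := (i, ⟨p, hpm⟩) with hτ
    refine ⟨Q τ, hfact τ, ?_, xl τ, ?_, ?_, ?_, ?_, ?_⟩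
    · exact (mul_dvd_mul_right (hpl.mul_left 2) _).trans (QD τ)
    · have := lx1 τ
      rw [← Fmod, eval_map] at this
      exact this
    · have := lx2 τ
      rw [← Fmod, derivative_map, eval_map] at this
      exact this
    · intro j hj
      rw [amod, if_neg hj]; exact lx5 τ
    · rw [amod, if_pos rfl, sub_zero]; exact lx3 τ
    · rw [amod, if_pos rfl, sub_zero]; exact lx4 τ
end PartM

/-- A finite-dimensional intermediate field of `ℂ/ℚ` is a number field. -/
noncomputable instance (F : IntermediateField ℚ ℂ) [FiniteDimensional ℚ F] :
    NumberField F := ⟨⟩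

section PartO
open Polynomial NumberField



theorem eisenstein_irred (f : ℤ[X]) (n : ℕ) (hn : 3 ≤ n) (hmon : f.Monic) (hdeg : f.natDegree = n) (q : ℕ) (hq : q.Prime)
    (hqc : ∀ k < n, (q : ℤ) ∣ f.coeff k) (hq0 : ¬ (q : ℤ) ^ 2 ∣ f.coeff 0) : Irreducible (f.map (algebraMap ℤ ℚ)) := by
  have hq' : Prime (q:ℤ) := Nat.prime_iff_prime_int.1 hq
  have hE : f.IsEisensteinAt (Ideal.span {(q:ℤ)}) := by
    refine hmon.isEisensteinAt_of_mem_of_notMem ?_ ?_ ?_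
    · exact ((Ideal.span_singleton_prime hq'.ne_zero).2 hq').ne_top
    · intro k hk; rw [Ideal.mem_span_singleton]; exact hqc k (hdeg ▸ hk)
    · rw [Ideal.span_singleton_pow, Ideal.mem_span_singleton]; exact hq0
  have := hE.irreducible ((Ideal.span_singleton_prime hq'.ne_zero).2 hq') hmon.isPrimitive (by omega)
  exact (hmon.irreducible_iff_irreducible_map_fraction_map (K := ℚ)).1 this

theorem fields_exist (n l : ℕ) (hn : 3 ≤ n) (hl : 1 ≤ l) : ∃ (C : ℝ) (q0 : ℕ), 0 < C ∧ ∀ q : ℕ, q.Prime → q0 < q →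
    ∃ (K : IntermediateField ℚ ℂ), ∃ h : FiniteDimensional ℚ K, Module.finrank ℚ K = n ∧
     (haveI := h; (q:ℤ) ∣ discr K ∧ |(discr K : ℝ)| ≤ C * (q:ℝ)^(2*l*(n-1)-1) ∧ l ∣ classNumber K) := by
  obtain ⟨C, q0, h⟩ := family n l hn hl
  refine ⟨((n:ℝ)^2*(C+1))^n * (((n:ℝ)+1)*(C+1))^(n-2), q0, by positivity, fun q hq hqq => ?_⟩
  obtain ⟨f, hmon, hdeg, hqc, hq0, hC, h1, h2, a, u, hfa, hcop, hloc⟩ := h q hq hqq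
  have hirr := eisenstein_irred f n hn hmon hdeg q hq hqc hq0
  have hd0 : (f.map (algebraMap ℤ ℂ)).degree ≠ 0 := by
    rw [hmon.degree_map, degree_eq_natDegree hmon.ne_zero, hdeg]; exact_mod_cast (by omega : n ≠ 0)
  obtain ⟨θ, hθ⟩ := IsAlgClosed.exists_root _ hd0
  have hθ' : aeval θ (f.map (algebraMap ℤ ℚ)) = 0 := by
    rw [aeval_map_algebraMap]
    rw [IsRoot, eval_map] at hθ; exact hθ
  have hminθ : minpoly ℚ θ = f.map (algebraMap ℤ ℚ) :=
    (minpoly.eq_of_irreducible_of_monic hirr hθ' (hmon.map _)).symm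
  have hint : IsIntegral ℚ θ := ⟨_, hmon.map _, hθ'⟩
  set K := IntermediateField.adjoin ℚ {θ} with hK
  set pb : PowerBasis ℚ K := IntermediateField.adjoin.powerBasis hint with hpb
  have hfd : FiniteDimensional ℚ K := pb.finite
  have hmin : minpoly ℚ pb.gen = f.map (algebraMap ℤ ℚ) := by
    rw [hpb, IntermediateField.adjoin.powerBasis_gen]
    exact (IntermediateField.minpoly_gen ℚ θ).trans hminθ
  have hfr : Module.finrank ℚ K = n := by
    rw [IntermediateField.adjoin.finrank hint, hminθ, hmon.natDegree_map, hdeg]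
  refine ⟨K, hfd, hfr, prime_dvd_discr K f pb hmin n hn hmon hdeg q hq hqc hq0, ?_,
    dvd_classNumber K f pb hmin n hn hmon hdeg h1 h2 l hl a u hfa hcop hloc⟩
  have hq1 : (1:ℝ) ≤ q := by exact_mod_cast hq.one_lt.le
  have hql : (1:ℝ) ≤ (q:ℝ)^l := one_le_pow₀ hq1
  have hb := discr_bound K f pb hmin n hn hmon hdeg h1 ((C+1) * (q:ℝ)^l) (by nlinarith [(Nat.cast_nonneg C : (0:ℝ) ≤ C)]) ?_
  · have h0 : (q:ℝ) ≤ |(f.coeff 0 : ℝ)| := by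
      have hne : f.coeff 0 ≠ 0 := fun h => hq0 (h ▸ dvd_zero _)
      have := Int.le_of_dvd (abs_pos.2 hne) ((dvd_abs _ _).2 (hqc 0 (by omega)))
      exact_mod_cast this
    have hqp : (0:ℝ) < q := by linarith
    refine le_of_mul_le_mul_right (a := (q:ℝ)) ?_ hqp
    calc |(discr K : ℝ)| * q ≤ |(discr K : ℝ)| * |(f.coeff 0 : ℝ)| := by gcongr
      _ ≤ _ := hb
      _ = ((n:ℝ)^2*(C+1))^n * (((n:ℝ)+1)*(C+1))^(n-2) * ((q:ℝ)^l)^(n + (n-2)) := by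
          rw [pow_add, ← mul_assoc ((n:ℝ)^2), ← mul_assoc ((n:ℝ)+1), mul_pow _ ((q:ℝ)^l), mul_pow _ ((q:ℝ)^l)]; ring
      _ = _ := by
          rw [mul_assoc _ _ (q:ℝ), ← pow_succ, ← pow_mul]
          congr 2
          have : n + (n-2) = 2 * (n-1) := by omega
          rw [this]
          have : 0 < 2 * l * (n-1) := by have : 0 < n - 1 := by omega
                                         positivity
          rw [Nat.sub_add_cancel this]; ring
  · intro k hk
    have h3 : |(f.coeff k : ℝ)| ≤ C * (q:ℝ)^l := by exact_mod_cast hC k hk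
    nlinarith

theorem analytic (A1 A2 A3 A4 ε : ℝ) (h1 : 0 ≤ A1) (h2 : 0 ≤ A2) (h3 : 0 ≤ A3) (h4 : 0 ≤ A4) (hε : 0 < ε) (hε1 : ε ≤ 1) :
    ∀ᶠ x : ℝ in Filter.atTop, A1 * x^(1-ε) * (A2 + A3 * Real.log x) + A4 ≤ ((x-1) * Real.log 2 - Real.log (x+2)) / Real.log x := by
  have e1 : ∀ᶠ x : ℝ in Filter.atTop, ‖Real.log x‖ ≤ 1 * ‖x^(ε/4)‖ :=
    (isLittleO_log_rpow_atTop (by positivity : 0 < ε/4)).bound one_pos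
  have e2 := (tendsto_rpow_atTop (by positivity : 0 < ε/2)).eventually_ge_atTop ((A1 * (A2 + A3) + A4 + 4) / Real.log 2)
  filter_upwards [e1, e2, Filter.eventually_gt_atTop (2:ℝ)] with x hx1 hx2 hx
  have hx0 : 0 < x := by linarith
  have hlog : 0 < Real.log x := Real.log_pos (by linarith)
  have hl2 : 0 < Real.log 2 := Real.log_pos (by norm_num)
  have hl21 : Real.log 2 ≤ 1 := by have := Real.log_two_lt_d9; linarith
  have hp4 : 0 < x^(ε/4) := by positivity
  rw [Real.norm_of_nonneg hlog.le, Real.norm_of_nonneg hp4.le, one_mul] at hx1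
  rw [le_div_iff₀ hlog]
  have hy1 : 1 ≤ x^(ε/4) := Real.one_le_rpow (by linarith) (by positivity)
  have hz1 : 1 ≤ x^(1-ε) := Real.one_le_rpow (by linarith) (by linarith)
  have hlogx2 : Real.log (x+2) ≤ 1 + Real.log x := by
    calc Real.log (x+2) ≤ Real.log (2 * x) := Real.log_le_log (by linarith) (by linarith)
      _ = Real.log 2 + Real.log x := Real.log_mul (by norm_num) hx0.ne'
      _ ≤ _ := by linarith
  rw [div_le_iff₀ hl2] at hx2
  have hprod : x^(1-ε) * (x^(ε/4))^2 * x^(ε/2) = x := by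
    rw [← Real.rpow_natCast, ← Real.rpow_mul hx0.le, ← Real.rpow_add hx0, ← Real.rpow_add hx0]
    conv_rhs => rw [← Real.rpow_one x]
    congr 1; push_cast; ring
  set y := x^(ε/4)
  set z := x^(1-ε)
  set w := x^(ε/2)
  set L := Real.log x
  have hzy : 1 ≤ z * y^2 := by nlinarith [one_le_pow₀ hy1 (n := 2)]
  have hyzy : y ≤ z * y^2 := by nlinarith
  have b1 : (A1 * z * (A2 + A3 * L)) * L ≤ A1 * (A2+A3) * (z * y^2) := by
    have c1 : A2 + A3 * L ≤ (A2 + A3) * y := by nlinarith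
    have c2 : (A2 + A3 * L) * L ≤ ((A2 + A3) * y) * y := by gcongr
    calc _ = A1 * z * ((A2 + A3 * L) * L) := by ring
      _ ≤ A1 * z * (((A2 + A3) * y) * y) := by gcongr
      _ = _ := by ring
  have b2 : A4 * L ≤ A4 * (z * y^2) := by gcongr; linarith
  have b3 : (A1 * (A2 + A3) + A4 + 4) * (z * y^2) ≤ x * Real.log 2 := by
    rw [← hprod]
    have : 0 ≤ z * y^2 := by linarith
    nlinarith
  nlinarith
end PartO

section PartP
open Polynomial NumberField
theorem card_fiber (S : Finset ℕ) (d : ℤ) (hd : d ≠ 0) (X : ℝ) (hX : |(d:ℝ)| ≤ X) (hS : ∀ q ∈ S, q.Prime ∧ (q:ℤ) ∣ d) :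
    S.card ≤ Nat.log 2 ⌊X⌋₊ := by
  have h1 : S ⊆ d.natAbs.primeFactors := fun q hq => by
    rw [Nat.mem_primeFactors]
    exact ⟨(hS q hq).1, Int.natCast_dvd.1 (hS q hq).2, Int.natAbs_ne_zero.2 hd⟩
  refine (Finset.card_le_card h1).trans ?_
  have hX' : d.natAbs ≤ ⌊X⌋₊ := by
    refine Nat.le_floor ?_
    rw [Nat.cast_natAbs, Int.cast_abs]; exact hX
  have hpos : 0 < d.natAbs := Int.natAbs_pos.2 hd
  refine Nat.le_log_of_pow_le (by norm_num) (le_trans ?_ hX')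
  calc 2 ^ d.natAbs.primeFactors.card ≤ ∏ p ∈ d.natAbs.primeFactors, p :=
        Finset.pow_card_le_prod _ _ _ (fun p hp => (Nat.prime_of_mem_primeFactors hp).two_le)
    _ ≤ _ := Nat.le_of_dvd hpos (Nat.prod_primeFactors_dvd _)

theorem eventually_count (n l : ℕ) (hn : 3 ≤ n) (hl : 1 ≤ l) (C : ℝ) (hC : 0 < C) (q0 : ℕ) :
    ∀ᶠ X : ℝ in Filter.atTop, ∃ U : ℕ, C * (U:ℝ)^(2*l*(n-1)-1) ≤ X ∧
      X ^ ((1 : ℝ) / (2 * ((n : ℝ) - 1) * (l : ℝ))) * (Nat.log 2 ⌊X⌋₊ : ℝ) + (q0 + 1) ≤ Nat.primeCounting U := by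
  set μ : ℝ := (1 : ℝ) / (2 * ((n : ℝ) - 1) * (l : ℝ)) with hμ
  have hn' : (3:ℝ) ≤ n := by exact_mod_cast hn
  have hl' : (1:ℝ) ≤ l := by exact_mod_cast hl
  have hden : 4 ≤ 2 * ((n : ℝ) - 1) * (l : ℝ) := by nlinarith
  have hμ0 : 0 < μ := by rw [hμ]; positivity
  have hμ1 : μ ≤ 1 := by rw [hμ, div_le_one (by linarith)]; linarith
  set d := 2*l*(n-1)-1 with hd
  have hd1 : d + 1 = 2*l*(n-1) := by
    have : 0 < 2 * l * (n-1) := by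
      have : 0 < n - 1 := by omega
      positivity
    omega
  have hdR : (d:ℝ) + 1 = 2 * ((n : ℝ) - 1) * (l : ℝ) := by
    have : ((d+1:ℕ):ℝ) = ((2*l*(n-1):ℕ):ℝ) := by rw [hd1]
    push_cast [Nat.cast_sub (by omega : 1 ≤ n)] at this
    rw [this]; ring
  have hdpos : (0:ℝ) < d := by linarith
  have hdne : d ≠ 0 := by rintro h; rw [h] at hdpos; simp at hdpos
  have hdμ : d * μ = 1 - μ := by
    rw [hμ, ← hdR]; field_simp; ring
  have hlog2 : 0 < Real.log 2 := Real.log_pos (by norm_num)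
  have htend : Filter.Tendsto (fun X : ℝ => (X / C)^((1:ℝ)/d)) Filter.atTop Filter.atTop :=
    (tendsto_rpow_atTop (by positivity)).comp (Filter.tendsto_id.atTop_div_const hC)
  have ev := htend.eventually (analytic (C^μ) (|Real.log C| / Real.log 2) (d / Real.log 2) (q0+1) μ (by positivity) (by positivity) (by positivity) (by positivity) hμ0 hμ1)
  filter_upwards [ev, htend.eventually_gt_atTop 1, Filter.eventually_gt_atTop 1] with X hX hx1 hX1
  set x := (X / C)^((1:ℝ)/d) with hx
  have hXx : X = C * x^d := by
    rw [hx, ← Real.rpow_natCast, ← Real.rpow_mul (by positivity), one_div, inv_mul_cancel₀ hdpos.ne', Real.rpow_one]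
    field_simp
  have hx0 : 0 < x := by linarith
  refine ⟨⌊x⌋₊, ?_, ?_⟩
  · rw [hXx]; gcongr; exact Nat.floor_le hx0.le
  · refine le_trans ?_ (hX.trans (Chebyshev.pi_ge' hx1))
    have h1 : X^μ = C^μ * x^(1-μ) := by
      rw [hXx, Real.mul_rpow hC.le (by positivity), ← Real.rpow_natCast, ← Real.rpow_mul hx0.le, hdμ]
    have h2 : (Nat.log 2 ⌊X⌋₊ : ℝ) ≤ |Real.log C| / Real.log 2 + d / Real.log 2 * Real.log x := by
      have h3 : (Nat.log 2 ⌊X⌋₊ : ℝ) * Real.log 2 ≤ Real.log X := by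
        rw [← Real.log_pow]
        refine Real.log_le_log (by positivity) ?_
        have hf : ⌊X⌋₊ ≠ 0 := (Nat.floor_pos.2 hX1.le).ne'
        have : ((2 ^ Nat.log 2 ⌊X⌋₊ : ℕ) : ℝ) ≤ ⌊X⌋₊ := by exact_mod_cast Nat.pow_log_le_self 2 hf
        push_cast at this
        exact this.trans (Nat.floor_le (by linarith))
      have h4 : Real.log X = Real.log C + d * Real.log x := by
        rw [hXx, Real.log_mul hC.ne' (by positivity), Real.log_pow]
      have h5 : |Real.log C| / Real.log 2 + d / Real.log 2 * Real.log x = (|Real.log C| + d * Real.log x) / Real.log 2 := by ring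
      rw [h5, le_div_iff₀ hlog2]
      linarith [le_abs_self (Real.log C)]
    rw [h1]
    gcongr
end PartP

/-- **Divisibility of class numbers, enumerative version.**
Let `n ≥ 3` and `ℓ ≥ 1` be integers and put `μ = 1/(2(n−1)ℓ)`.  There exist
`X₀ > 0` and `c > 0` (depending only on `n` and `ℓ`) such that for every real
`X > X₀` there exist at least `c·X^μ` pairwise non-isomorphic number fields of
degree `n` over `ℚ`, with absolute discriminant at most `X` and class number
divisible by `ℓ`.  (Number fields are realized as intermediate fields of `ℂ/ℚ`.) -/
theorem class_number_divisibility_count (n ℓ : ℕ) (hn : 3 ≤ n) (hℓ : 1 ≤ ℓ) :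
    ∃ X₀ c : ℝ, 0 < X₀ ∧ 0 < c ∧
      ∀ X : ℝ, X₀ < X →
        ∃ (m : ℕ) (K : Fin m → IntermediateField ℚ ℂ),
          c * X ^ ((1 : ℝ) / (2 * ((n : ℝ) - 1) * (ℓ : ℝ))) ≤ (m : ℝ) ∧
          (∀ i j : Fin m, i ≠ j → IsEmpty ((K i) ≃+* (K j))) ∧
          ∀ i : Fin m,
            ∃ h : FiniteDimensional ℚ (K i),
              Module.finrank ℚ (K i) = n ∧
              (haveI := h;
                |(NumberField.discr (K i) : ℝ)| ≤ X ∧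
                ℓ ∣ NumberField.classNumber (K i)) := by
  classical
  obtain ⟨C, q0, hC, hf⟩ := fields_exist n ℓ hn hℓ
  obtain ⟨X₁, hX₁⟩ := Filter.eventually_atTop.1 (eventually_count n ℓ hn hℓ C hC q0)
  refine ⟨max X₁ 2, 1, by positivity, one_pos, fun X hX => ?_⟩
  obtain ⟨U, hU1, hU2⟩ := hX₁ X ((le_max_left _ _).trans hX.le)
  have hX2 : 2 < X := (le_max_right _ _).trans_lt hX
  set P := (Finset.range (U+1)).filter (fun q => q.Prime ∧ q0 < q) with hP
  have hmem : ∀ q : P, q.1.Prime ∧ q0 < q.1 ∧ q.1 ≤ U := fun q => by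
    have := Finset.mem_filter.1 q.2
    have h2 := Finset.mem_range.1 this.1
    exact ⟨this.2.1, this.2.2, by omega⟩
  have hf' := fun q : P => hf q.1 (hmem q).1 (hmem q).2.1
  choose K hfd hfr hdv hdb hcl using hf'
  set dd : P → ℤ := fun q => haveI := hfd q; NumberField.discr (K q) with hdd
  have hddX : ∀ q, |(dd q : ℝ)| ≤ X := fun q => by
    refine (hdb q).trans (le_trans ?_ hU1)
    have : (q.1:ℝ) ≤ U := by exact_mod_cast (hmem q).2.2
    gcongr
  have hdd0 : ∀ q, dd q ≠ 0 := fun q => by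
    haveI := hfd q; exact NumberField.discr_ne_zero (K q)
  set I := (Finset.univ : Finset P).image dd with hI
  have hcard : (Finset.univ : Finset P).card ≤ Nat.log 2 ⌊X⌋₊ * I.card := by
    refine Finset.card_le_mul_card_image _ _ fun d hd => ?_
    obtain ⟨q1, _, rfl⟩ := Finset.mem_image.1 hd
    rw [← Finset.card_image_of_injective _ Subtype.val_injective]
    refine card_fiber _ (dd q1) (hdd0 q1) X (hddX q1) fun q hq => ?_
    obtain ⟨q2, h2, rfl⟩ := Finset.mem_image.1 hq
    rw [Finset.mem_filter] at h2
    exact ⟨(hmem q2).1, h2.2 ▸ hdv q2⟩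
  have hPc : Nat.primeCounting U ≤ P.card + (q0 + 1) := by
    rw [Nat.primeCounting, Nat.primeCounting', Nat.count_eq_card_filter_range]
    have : (Finset.range (U+1)).filter Nat.Prime ⊆ P ∪ Finset.range (q0+1) := by
      intro q hq
      rw [Finset.mem_filter] at hq
      rw [Finset.mem_union, hP, Finset.mem_filter, Finset.mem_range (n := q0+1)]
      by_cases h : q0 < q
      · exact Or.inl ⟨hq.1, hq.2, h⟩
      · exact Or.inr (by omega)
    refine (Finset.card_le_card this).trans ((Finset.card_union_le _ _).trans ?_)
    rw [Finset.card_range]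
  have hrep : ∀ d : I, ∃ q : P, dd q = d.1 := fun d => by
    obtain ⟨q, _, hq⟩ := Finset.mem_image.1 d.2
    exact ⟨q, hq⟩
  choose rep hrep using hrep
  refine ⟨I.card, fun i => K (rep (I.equivFin.symm i)), ?_, fun i j hij => ⟨fun e => ?_⟩, fun i => ⟨hfd _, hfr _, hddX _, hcl _⟩⟩
  · rw [one_mul]
    have hL : 0 < Nat.log 2 ⌊X⌋₊ := Nat.log_pos (by norm_num) (Nat.le_floor (by exact_mod_cast hX2.le))
    have hL' : (0:ℝ) < (Nat.log 2 ⌊X⌋₊ : ℝ) := by exact_mod_cast hL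
    rw [Finset.card_univ, Fintype.card_coe] at hcard
    have h1 : (Nat.primeCounting U : ℝ) ≤ Nat.log 2 ⌊X⌋₊ * I.card + (q0 + 1) := by
      exact_mod_cast hPc.trans (by omega)
    refine le_of_mul_le_mul_right ?_ hL'
    linarith
  · haveI := hfd (rep (I.equivFin.symm i))
    haveI := hfd (rep (I.equivFin.symm j))
    have h := NumberField.discr_eq_discr_of_ringEquiv _ e
    have h' : dd (rep (I.equivFin.symm i)) = dd (rep (I.equivFin.symm j)) := h
    rw [hrep, hrep] at h'
    exact hij (I.equivFin.symm.injective (Subtype.ext h'))
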